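/- arXiv:1805.03288 — 6 statements merged into one kernel-verified Lean document; each statement's English description precedes it below -/
import Mathlib

section
/- Fix an integer n ≥ 1, a real λ > 1/(2n), and positive reals s₁,...,s_{n+1}. Define G : ℝ^{n+1} → ℝ by G(c) = −(1/(2n)) Σ_{i=1}^{n} (cᵢ + c_{i+1}) + (λ − 1/(2n)) Σ_{i=1}^{n} |cᵢ − c_{i+1}| + Σ_{i=1}^{n+1} sᵢ e^{cᵢ}, and define H : (0,∞)^{n+1} → ℝ by H(z) = (1/2) Σ_{i=1}^{n+1} sᵢ zᵢ² + Σ_{i=1}^{n+1} wᵢ zᵢ + (λ − 1/(2n)) Σ_{i=1}^{n} |zᵢ − z_{i+1}|, where w₁ = w_{n+1} = −1/(2n) and wᵢ = −1/n for 2 ≤ i ≤ n. Then ĉ ∈ ℝ^{n+1} minimizes G over ℝ^{n+1} if and only if ẑ = (e^{ĉ₁},...,e^{ĉ_{n+1}}) minimizes H over (0,∞)^{n+1}. -/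
open Filter Topology

noncomputable def phiS (a b : ℝ) : ℝ := if a = 0 then |b| else if 0 < a then b else -b

lemma phiS_conv (a b : ℝ) : |a| + phiS a b ≤ |a + b| := by
  unfold phiS
  split_ifs with h1 h2
  · simp [h1]
  · rw [abs_of_pos h2]; exact le_abs_self _
  · rw [abs_of_nonpos (not_lt.mp h2)]
    have := neg_abs_le (a + b)
    linarith

lemma phiS_ev (a b : ℝ) : ∀ᶠ t in 𝓝[>] (0:ℝ), |a + t * b| = |a| + t * phiS a b := by
  have hc : Tendsto (fun t : ℝ => a + t * b) (𝓝[>] 0) (𝓝 a) := by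
    have : ContinuousAt (fun t : ℝ => a + t * b) 0 := by fun_prop
    have h := this.tendsto
    simp only [zero_mul, add_zero] at h
    exact h.mono_left nhdsWithin_le_nhds
  unfold phiS
  split_ifs with h1 h2
  · filter_upwards [self_mem_nhdsWithin] with t ht
    simp [h1, abs_mul, abs_of_pos (Set.mem_Ioi.mp ht)]
  · filter_upwards [hc.eventually (lt_mem_nhds h2)] with t ht
    rw [abs_of_pos ht, abs_of_pos h2]
  · have h3 : a < 0 := lt_of_le_of_ne (not_lt.mp h2) h1
    filter_upwards [hc.eventually (gt_mem_nhds h3)] with t ht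
    rw [abs_of_neg ht, abs_of_neg h3]; ring

lemma phiS_exp (x y b : ℝ) : phiS (Real.exp x - Real.exp y) b = phiS (x - y) b := by
  unfold phiS
  simp [sub_eq_zero]

noncomputable def tvS {n : ℕ} (c : Fin (n + 1) → ℝ) : ℝ := ∑ i : Fin n, |c i.castSucc - c i.succ|

noncomputable def pS {n : ℕ} (c d : Fin (n + 1) → ℝ) : ℝ :=
  ∑ i : Fin n, phiS (c i.castSucc - c i.succ) (d i.castSucc - d i.succ)

lemma tvS_conv {n : ℕ} (c d : Fin (n + 1) → ℝ) : tvS c + pS c d ≤ tvS (fun i => c i + d i) := by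
  unfold tvS pS
  rw [← Finset.sum_add_distrib]
  refine Finset.sum_le_sum fun i _ => ?_
  refine (phiS_conv _ _).trans (le_of_eq ?_)
  congr 1; ring

lemma tvS_ev {n : ℕ} (c d : Fin (n + 1) → ℝ) :
    ∀ᶠ t in 𝓝[>] (0:ℝ), tvS (fun i => c i + t * d i) = tvS c + t * pS c d := by
  have : ∀ᶠ t in 𝓝[>] (0:ℝ), ∀ i : Fin n, _ :=
    eventually_all.mpr fun i : Fin n =>
      phiS_ev (c i.castSucc - c i.succ) (d i.castSucc - d i.succ)
  filter_upwards [this] with t ht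
  unfold tvS pS
  rw [Finset.mul_sum, ← Finset.sum_add_distrib]
  refine Finset.sum_congr rfl fun i _ => ?_
  rw [← ht i]
  congr 1; ring

lemma pS_exp {n : ℕ} (c d : Fin (n + 1) → ℝ) : pS (fun i => Real.exp (c i)) d = pS c d := by
  unfold pS
  simp only [phiS_exp]

lemma necS {n : ℕ} (c d : Fin (n + 1) → ℝ) (F : ℝ → ℝ) (L m : ℝ) (hF : HasDerivAt F L 0)
    (h : ∀ᶠ t in 𝓝[>] (0:ℝ), F 0 + m * tvS c ≤ F t + m * tvS (fun i => c i + t * d i)) :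
    0 ≤ L + m * pS c d := by
  have hd : HasDerivAt (fun t => F t + t * (m * pS c d)) (L + 1 * (m * pS c d)) 0 :=
    hF.add ((hasDerivAt_id (0:ℝ)).mul_const _)
  rw [one_mul] at hd
  have hs := hd.tendsto_slope_zero_right
  refine ge_of_tendsto hs ?_
  filter_upwards [h, tvS_ev c d, self_mem_nhdsWithin] with t h1 h2 h3
  have h3' : 0 < t := h3
  rw [h2] at h1
  simp only [zero_add, zero_mul, add_zero, smul_eq_mul]
  refine mul_nonneg (inv_nonneg.mpr h3'.le) ?_
  nlinarith

lemma linS (n : ℕ) (hn : 1 ≤ n) (c : Fin (n + 1) → ℝ) :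
    -(1 / (2 * (n : ℝ))) * ∑ i : Fin n, (c i.castSucc + c i.succ) =
    ∑ i : Fin (n + 1), (if (i : ℕ) = 0 ∨ (i : ℕ) = n then -(1 / (2 * (n : ℝ)))
          else -(1 / (n : ℝ))) * c i := by
  have hw : ∀ i : Fin (n + 1), (if (i : ℕ) = 0 ∨ (i : ℕ) = n then -(1 / (2 * (n : ℝ)))
          else -(1 / (n : ℝ))) * c i = -(1 / (n : ℝ)) * c i
          + 1 / (2 * (n : ℝ)) * (if i = 0 then c i else 0)
          + 1 / (2 * (n : ℝ)) * (if i = Fin.last n then c i else 0) := by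
    intro i
    have hn' : (n : ℝ) ≠ 0 := by positivity
    have e0 : i = 0 ↔ (i : ℕ) = 0 := Fin.ext_iff
    have e1 : i = Fin.last n ↔ (i : ℕ) = n := Fin.ext_iff
    simp only [e0, e1]
    by_cases h0 : (i : ℕ) = 0
    · have : (i : ℕ) ≠ n := by omega
      simp only [h0, true_or, if_true]
      rw [if_neg (by omega)]
      field_simp; ring
    · by_cases h1 : (i : ℕ) = n
      · rw [if_pos (Or.inr h1), if_neg h0, if_pos h1]
        field_simp; ring
      · rw [if_neg (by tauto), if_neg h0, if_neg h1]; ring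
  rw [Finset.sum_congr rfl fun i _ => hw i, Finset.sum_add_distrib]
  simp only [Finset.sum_add_distrib, ← Finset.mul_sum]
  simp only [Finset.sum_ite_eq', Finset.mem_univ, if_true]
  have h1 := Fin.sum_univ_castSucc c
  have h2 := Fin.sum_univ_succ c
  have hn' : (n : ℝ) ≠ 0 := by positivity
  rw [show ∑ i : Fin n, c i.castSucc = ∑ i, c i - c (Fin.last n) by linarith,
    show ∑ i : Fin n, c i.succ = ∑ i, c i - c 0 by linarith]
  field_simp; ring

lemma GS {n : ℕ} (m : ℝ) (hm : 0 ≤ m) (s w c : Fin (n + 1) → ℝ) (hs : ∀ i, 0 < s i) :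
    (∀ x : Fin (n + 1) → ℝ, ∑ i, (w i * c i + s i * Real.exp (c i)) + m * tvS c ≤
      ∑ i, (w i * x i + s i * Real.exp (x i)) + m * tvS x) ↔
    ∀ d : Fin (n + 1) → ℝ, 0 ≤ ∑ i, (w i + s i * Real.exp (c i)) * d i + m * pS c d := by
  constructor
  · intro h d
    refine necS c d (fun t => ∑ i, (w i * (c i + t * d i) + s i * Real.exp (c i + t * d i)))
      _ m ?_ ?_
    · refine HasDerivAt.fun_sum fun i _ => ?_
      have h1 : HasDerivAt (fun t : ℝ => c i + t * d i) (d i) 0 := by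
        simpa using ((hasDerivAt_id (0:ℝ)).mul_const (d i)).const_add (c i)
      have := (h1.const_mul (w i)).fun_add (h1.exp.const_mul (s i))
      refine this.congr_deriv ?_
      simp only [zero_mul, add_zero]; ring
    · refine Eventually.of_forall fun t => ?_
      have := h fun i => c i + t * d i
      simpa using this
  · intro h x
    have h1 := h fun i => x i - c i
    have h2 := tvS_conv c fun i => x i - c i
    simp only [add_sub_cancel] at h2
    have h3 : ∑ i, (w i * c i + s i * Real.exp (c i))
        + ∑ i, (w i + s i * Real.exp (c i)) * (x i - c i)
        ≤ ∑ i, (w i * x i + s i * Real.exp (x i)) := by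
      rw [← Finset.sum_add_distrib]
      refine Finset.sum_le_sum fun i _ => ?_
      have e1 := Real.add_one_le_exp (x i - c i)
      have e2 : Real.exp (x i) = Real.exp (c i) * Real.exp (x i - c i) := by
        rw [← Real.exp_add]; congr 1; ring
      have e3 := mul_le_mul_of_nonneg_left e1 (mul_pos (hs i) (Real.exp_pos (c i))).le
      rw [e2]; linarith
    have h4 := mul_le_mul_of_nonneg_left h2 hm
    linarith

lemma HS {n : ℕ} (m : ℝ) (hm : 0 ≤ m) (s w c : Fin (n + 1) → ℝ) (hs : ∀ i, 0 < s i)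
    (hc : ∀ i, 0 < c i) :
    (∀ x : Fin (n + 1) → ℝ, (∀ i, 0 < x i) →
      ∑ i, (w i * c i + 1 / 2 * (s i * c i ^ 2)) + m * tvS c ≤
      ∑ i, (w i * x i + 1 / 2 * (s i * x i ^ 2)) + m * tvS x) ↔
    ∀ d : Fin (n + 1) → ℝ, 0 ≤ ∑ i, (w i + s i * c i) * d i + m * pS c d := by
  constructor
  · intro h d
    refine necS c d (fun t => ∑ i, (w i * (c i + t * d i) + 1 / 2 * (s i * (c i + t * d i) ^ 2)))
      _ m ?_ ?_
    · refine HasDerivAt.fun_sum fun i _ => ?_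
      have h1 : HasDerivAt (fun t : ℝ => c i + t * d i) (d i) 0 := by
        simpa using ((hasDerivAt_id (0:ℝ)).mul_const (d i)).const_add (c i)
      have := (h1.const_mul (w i)).fun_add (((h1.fun_pow 2).const_mul (s i)).const_mul (1 / 2))
      refine this.congr_deriv ?_
      simp; ring
    · have : ∀ᶠ t in 𝓝[>] (0:ℝ), ∀ i, 0 < c i + t * d i := by
        refine eventually_all.mpr fun i => ?_
        have h0 : ContinuousAt (fun t : ℝ => c i + t * d i) 0 := by fun_prop
        exact (h0.eventually (lt_mem_nhds (by simpa using hc i))).filter_mono nhdsWithin_le_nhds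
      filter_upwards [this] with t ht
      have := h (fun i => c i + t * d i) ht
      simpa using this
  · intro h x _
    have h1 := h fun i => x i - c i
    have h2 := tvS_conv c fun i => x i - c i
    simp only [add_sub_cancel] at h2
    have h3 : ∑ i, (w i * c i + 1 / 2 * (s i * c i ^ 2))
        + ∑ i, (w i + s i * c i) * (x i - c i)
        ≤ ∑ i, (w i * x i + 1 / 2 * (s i * x i ^ 2)) := by
      rw [← Finset.sum_add_distrib]
      refine Finset.sum_le_sum fun i _ => ?_
      have := mul_nonneg (hs i).le (sq_nonneg (x i - c i))
      nlinarith
    have h4 := mul_le_mul_of_nonneg_left h2 hm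
    linarith

/-- exponential change of variables.  `ĉ` minimizes the
log-density objective `G` over `ℝ^{n+1}` iff `ẑ = exp(ĉ)` (componentwise)
minimizes the total-variation penalized quadratic `H` over the positive
orthant `(0,∞)^{n+1}`.  Here indices `1,…,n+1` are realized as `Fin (n+1)`,
and the pair `(cᵢ, c_{i+1})` as `(c i.castSucc, c i.succ)` for `i : Fin n`. -/
theorem stmt_3 (n : ℕ) (hn : 1 ≤ n)
    (lam : ℝ) (hlam : 1 / (2 * (n : ℝ)) < lam)
    (s : Fin (n + 1) → ℝ) (hs : ∀ i, 0 < s i)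
    (G H : (Fin (n + 1) → ℝ) → ℝ)
    (hG : ∀ c : Fin (n + 1) → ℝ, G c =
      -(1 / (2 * (n : ℝ))) * ∑ i : Fin n, (c i.castSucc + c i.succ)
      + (lam - 1 / (2 * (n : ℝ))) * ∑ i : Fin n, |c i.castSucc - c i.succ|
      + ∑ i : Fin (n + 1), s i * Real.exp (c i))
    (hH : ∀ z : Fin (n + 1) → ℝ, H z =
      (1 / 2) * ∑ i : Fin (n + 1), s i * z i ^ 2
      + ∑ i : Fin (n + 1), (if (i : ℕ) = 0 ∨ (i : ℕ) = n then -(1 / (2 * (n : ℝ)))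
          else -(1 / (n : ℝ))) * z i
      + (lam - 1 / (2 * (n : ℝ))) * ∑ i : Fin n, |z i.castSucc - z i.succ|)
    (chat : Fin (n + 1) → ℝ) :
    (∀ c : Fin (n + 1) → ℝ, G chat ≤ G c) ↔
      (∀ z : Fin (n + 1) → ℝ, (∀ i, 0 < z i) →
        H (fun i => Real.exp (chat i)) ≤ H z) := by
  have hm : 0 ≤ lam - 1 / (2 * (n : ℝ)) := by linarith
  set w : Fin (n + 1) → ℝ := fun i => if (i : ℕ) = 0 ∨ (i : ℕ) = n then -(1 / (2 * (n : ℝ)))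
          else -(1 / (n : ℝ)) with hw
  have hG' : ∀ c, G c = ∑ i, (w i * c i + s i * Real.exp (c i))
      + (lam - 1 / (2 * (n : ℝ))) * tvS c := by
    intro c
    rw [hG, linS n hn, Finset.sum_add_distrib]
    simp only [tvS, hw]
    ring
  have hH' : ∀ c, H c = ∑ i, (w i * c i + 1 / 2 * (s i * c i ^ 2))
      + (lam - 1 / (2 * (n : ℝ))) * tvS c := by
    intro c
    rw [hH, Finset.sum_add_distrib, ← Finset.mul_sum]
    simp only [tvS, hw]
    ring
  simp only [hG', hH']
  rw [GS _ hm s w chat hs, HS _ hm s w _ hs fun i => Real.exp_pos (chat i)]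
  simp only [pS_exp]
end

section
/- Fix an integer n ≥ 3, a real λ > 1/(2n), and strictly positive reals s₁,...,s_{n+1}. Let w ∈ ℝ^{n+1} with w₁ = w_{n+1} = −1/(2n) and wᵢ = −1/n for 2 ≤ i ≤ n, and let ẑ be a minimizer over ℝ^{n+1} of H(z) = (1/2) Σ_{i=1}^{n+1} sᵢ zᵢ² + Σ_{i=1}^{n+1} wᵢ zᵢ + (λ − 1/(2n)) Σ_{i=1}^{n} |zᵢ − z_{i+1}|. Then for every interior index i with 2 ≤ i ≤ n − 1: if sᵢ ≤ s_{i+1} then ẑᵢ ≥ ẑ_{i+1}, and if sᵢ ≥ s_{i+1} then ẑᵢ ≤ ẑ_{i+1}. -/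
theorem aux_nonneg (n : ℕ) (s w : Fin (n + 1) → ℝ) (hs : ∀ i, 0 < s i) (hw : ∀ i, w i < 0)
    (m : ℝ) (hm : 0 ≤ m) (z : Fin (n + 1) → ℝ)
    (hmin : ∀ y : Fin (n + 1) → ℝ,
      (1 / 2) * ∑ i : Fin (n + 1), s i * z i ^ 2
      + ∑ i : Fin (n + 1), w i * z i + m * ∑ i : Fin n, |z i.castSucc - z i.succ| ≤
      (1 / 2) * ∑ i : Fin (n + 1), s i * y i ^ 2
      + ∑ i : Fin (n + 1), w i * y i + m * ∑ i : Fin n, |y i.castSucc - y i.succ|) :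
    ∀ k, 0 ≤ z k := by
  intro k
  by_contra hk
  push Not at hk
  have h := hmin (fun i => max (z i) 0)
  have h1 : ∑ i : Fin (n + 1), s i * (max (z i) 0) ^ 2 ≤ ∑ i : Fin (n + 1), s i * z i ^ 2 := by
    apply Finset.sum_le_sum
    intro i _
    apply mul_le_mul_of_nonneg_left _ (hs i).le
    rcases max_cases (z i) 0 with ⟨h, _⟩ | ⟨h, _⟩ <;> rw [h]
    nlinarith [sq_nonneg (z i)]
  have h2 : ∑ i : Fin (n + 1), w i * (max (z i) 0) < ∑ i : Fin (n + 1), w i * z i := by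
    apply Finset.sum_lt_sum
    · intro i _
      exact mul_le_mul_of_nonpos_left (le_max_left _ _) (hw i).le
    · refine ⟨k, Finset.mem_univ _, ?_⟩
      rw [max_eq_right hk.le]
      nlinarith [hw k]
  have h3 : ∑ i : Fin n, |max (z i.castSucc) 0 - max (z i.succ) 0| ≤
      ∑ i : Fin n, |z i.castSucc - z i.succ| := by
    apply Finset.sum_le_sum
    intro i _
    exact abs_max_sub_max_le_abs _ _ _
  have h4 := mul_le_mul_of_nonneg_left h3 hm
  linarith

theorem aux_key (n : ℕ) (s w : Fin (n + 1) → ℝ) (hs : ∀ i, 0 < s i)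
    (m : ℝ) (hm : 0 ≤ m) (z : Fin (n + 1) → ℝ) (hz : ∀ k, 0 ≤ z k)
    (hmin : ∀ y : Fin (n + 1) → ℝ,
      (1 / 2) * ∑ i : Fin (n + 1), s i * z i ^ 2
      + ∑ i : Fin (n + 1), w i * z i + m * ∑ i : Fin n, |z i.castSucc - z i.succ| ≤
      (1 / 2) * ∑ i : Fin (n + 1), s i * y i ^ 2
      + ∑ i : Fin (n + 1), w i * y i + m * ∑ i : Fin n, |y i.castSucc - y i.succ|)
    (i : Fin n) (h1i : 1 ≤ (i : ℕ)) (hi : (i : ℕ) + 1 < n) (p q : Fin (n + 1))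
    (hpq : (p = i.castSucc ∧ q = i.succ) ∨ (q = i.castSucc ∧ p = i.succ))
    (hwpq : w p = w q) (hspq : s p ≤ s q) : z q ≤ z p := by
  by_contra hlt
  push Not at hlt
  have hne : p ≠ q := by rintro rfl; exact lt_irrefl _ hlt
  set G := s q * z q - s p * z p with hG
  have hGpos : 0 < G := by
    have := mul_le_mul_of_nonneg_right hspq (hz q)
    have := mul_lt_mul_of_pos_left hlt (hs p)
    linarith
  have hS : 0 < s p + s q := add_pos (hs p) (hs q)
  obtain ⟨t, ht, ht1, ht2⟩ : ∃ t : ℝ, 0 < t ∧ 2 * t ≤ z q - z p ∧ t * (s p + s q) ≤ G := by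
    refine ⟨min ((z q - z p) / 2) (G / (s p + s q)), ?_, ?_, ?_⟩
    · apply lt_min
      · linarith
      · positivity
    · linarith [min_le_left ((z q - z p) / 2) (G / (s p + s q))]
    · rw [← le_div_iff₀ hS]
      exact min_le_right _ _
  set y : Fin (n + 1) → ℝ := fun k => if k = p then z p + t else if k = q then z q - t else z k
    with hy
  have h := hmin y
  have e1 : ∑ k, s k * y k ^ 2 = ∑ k, s k * z k ^ 2 + s p * (2 * t * z p + t ^ 2)
      + s q * (-2 * t * z q + t ^ 2) := by
    have : ∀ k, s k * y k ^ 2 = s k * z k ^ 2 + (if k = p then s p * (2 * t * z p + t ^ 2) else 0)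
      + (if k = q then s q * (-2 * t * z q + t ^ 2) else 0) := by
      intro k
      by_cases hkp : k = p
      · subst hkp
        simp only [hy, if_true, if_neg hne]; ring
      · by_cases hkq : k = q
        · subst hkq
          simp only [hy, if_true, if_neg hkp]; ring
        · simp only [hy, if_neg hkp, if_neg hkq]; ring
    simp only [this, Finset.sum_add_distrib, Finset.sum_ite_eq', Finset.mem_univ, if_true]
  have e2 : ∑ k, w k * y k = ∑ k, w k * z k := by
    have : ∀ k, w k * y k = w k * z k + (if k = p then w p * t else 0)
      + (if k = q then - (w q * t) else 0) := by
      intro k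
      by_cases hkp : k = p
      · subst hkp
        simp only [hy, if_true, if_neg hne]; ring
      · by_cases hkq : k = q
        · subst hkq
          simp only [hy, if_true, if_neg hkp]; ring
        · simp only [hy, if_neg hkp, if_neg hkq]; ring
    simp only [this, Finset.sum_add_distrib, Finset.sum_ite_eq', Finset.mem_univ, if_true]
    rw [hwpq]; ring
  have hd : ∀ k, |y k - z k| ≤ t := by
    intro k
    simp only [hy]
    split_ifs with h1 h2
    · subst h1; rw [add_sub_cancel_left, abs_of_pos ht]
    · subst h2; rw [sub_sub_cancel_left, abs_neg, abs_of_pos ht]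
    · simp [ht.le]
  have hd0 : ∀ k : Fin (n + 1), (k : ℕ) ≠ i → (k : ℕ) ≠ i + 1 → y k = z k := by
    intro k h1 h2
    have hkp : k ≠ p := by
      rintro rfl
      rcases hpq with ⟨h, _⟩ | ⟨_, h⟩ <;> simp [h] at h1 h2
    have hkq : k ≠ q := by
      rintro rfl
      rcases hpq with ⟨_, h⟩ | ⟨h, _⟩ <;> simp [h] at h1 h2
    simp only [hy, if_neg hkp, if_neg hkq]
  have hyp : y p = z p + t := by simp [hy]
  have hyq : y q = z q - t := by simp [hy, hne.symm]
  have e3 : ∑ j : Fin n, |y j.castSucc - y j.succ| ≤ ∑ j : Fin n, |z j.castSucc - z j.succ| := by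
    have : ∀ j : Fin n, |y j.castSucc - y j.succ| ≤ |z j.castSucc - z j.succ|
        + (if j = i then -2 * t else 0) + (if j = ⟨i - 1, by omega⟩ then t else 0)
        + (if j = ⟨i + 1, hi⟩ then t else 0) := by
      intro j
      simp only [Fin.ext_iff]
      have a1 := hd j.castSucc
      have a2 := hd j.succ
      by_cases c1 : (j : ℕ) = i
      · have hji : j = i := Fin.ext c1
        subst hji
        rw [if_pos rfl, if_neg (by omega), if_neg (by omega)]
        rcases hpq with ⟨hp, hq⟩ | ⟨hq, hp⟩
        · rw [← hp, ← hq, hyp, hyq, abs_of_nonpos (by linarith), abs_of_nonpos (by linarith)]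
          linarith
        · rw [← hp, ← hq, hyp, hyq, abs_of_nonneg (by linarith), abs_of_nonneg (by linarith)]
          linarith
      · by_cases c2 : (j : ℕ) = i - 1
        · rw [if_neg c1, if_pos c2, if_neg (by omega)]
          rw [hd0 j.castSucc (by simp; omega) (by simp; omega)]
          have := abs_sub_le (z j.castSucc) (z j.succ) (y j.succ)
          rw [abs_sub_comm (z j.succ)] at this
          linarith
        · by_cases c3 : (j : ℕ) = i + 1
          · rw [if_neg c1, if_neg c2, if_pos c3]
            rw [hd0 j.succ (by simp; omega) (by simp; omega)]
            have := abs_sub_le (y j.castSucc) (z j.castSucc) (z j.succ)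
            linarith
          · rw [if_neg c1, if_neg c2, if_neg c3]
            rw [hd0 j.castSucc (by simp; omega) (by simp; omega),
              hd0 j.succ (by simp; omega) (by simp; omega)]
            linarith
    refine (Finset.sum_le_sum (fun j _ => this j)).trans ?_
    simp only [Finset.sum_add_distrib, Finset.sum_ite_eq', Finset.mem_univ, if_true]
    linarith
  have e4 := mul_le_mul_of_nonneg_left e3 hm
  rw [e1, e2] at h
  have e5 : t * (t * (s p + s q)) ≤ t * G := mul_le_mul_of_nonneg_left ht2 ht.le
  have e6 : 0 < t * G := mul_pos ht hGpos
  rw [hG] at e5 e6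
  nlinarith

/-- the ordering property.  For the total-variation penalized
quadratic objective `H` (whose minimizer gives the piecewise constant values
of the univariate FDE), among adjacent *interior* segments (1-indexed
segments `i, i+1` with `2 ≤ i ≤ n-1`, realized as `i.castSucc, i.succ` for
`i : Fin n` with `1 ≤ i ≤ n-2`), the shorter segment receives the larger
value: `sᵢ ≤ s_{i+1} → ẑᵢ ≥ ẑ_{i+1}` and `sᵢ ≥ s_{i+1} → ẑᵢ ≤ ẑ_{i+1}`. -/
theorem stmt_5 (n : ℕ) (hn : 3 ≤ n)
    (lam : ℝ) (hlam : 1 / (2 * (n : ℝ)) < lam)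
    (s : Fin (n + 1) → ℝ) (hs : ∀ i, 0 < s i)
    (w : Fin (n + 1) → ℝ)
    (hw : ∀ i : Fin (n + 1),
      w i = if (i : ℕ) = 0 ∨ (i : ℕ) = n then -(1 / (2 * (n : ℝ)))
        else -(1 / (n : ℝ)))
    (H : (Fin (n + 1) → ℝ) → ℝ)
    (hH : ∀ z : Fin (n + 1) → ℝ, H z =
      (1 / 2) * ∑ i : Fin (n + 1), s i * z i ^ 2
      + ∑ i : Fin (n + 1), w i * z i
      + (lam - 1 / (2 * (n : ℝ))) * ∑ i : Fin n, |z i.castSucc - z i.succ|)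
    (zhat : Fin (n + 1) → ℝ)
    (hmin : ∀ z : Fin (n + 1) → ℝ, H zhat ≤ H z) :
    ∀ i : Fin n, 1 ≤ (i : ℕ) → (i : ℕ) ≤ n - 2 →
      (s i.castSucc ≤ s i.succ → zhat i.succ ≤ zhat i.castSucc) ∧
      (s i.succ ≤ s i.castSucc → zhat i.castSucc ≤ zhat i.succ) := by
  have hn0 : (0 : ℝ) < n := by
    have : 0 < n := by omega
    exact_mod_cast this
  have hwneg : ∀ i, w i < 0 := by
    intro i
    rw [hw]
    split_ifs
    · have : 0 < 1 / (2 * (n : ℝ)) := by positivity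
      linarith
    · have : 0 < 1 / (n : ℝ) := by positivity
      linarith
  simp only [hH] at hmin
  have hm : 0 ≤ lam - 1 / (2 * (n : ℝ)) := by linarith
  have hz := aux_nonneg n s w hs hwneg _ hm zhat hmin
  intro i h1 h2
  have hww : w i.castSucc = w i.succ := by
    rw [hw, hw, if_neg (by simp; omega), if_neg (by simp; omega)]
  exact ⟨fun h => aux_key n s w hs _ hm zhat hz hmin i h1 (by omega) _ _ (Or.inl ⟨rfl, rfl⟩) hww h,
    fun h => aux_key n s w hs _ hm zhat hz hmin i h1 (by omega) _ _ (Or.inr ⟨rfl, rfl⟩) hww.symm h⟩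
end

section
/- Let [a,b] ⊂ ℝ be compact, f₀ a probability density on [a,b] with f₀ > 0 and TV(log f₀) < ∞, and let F be the class of probability densities f on [a,b] with f > 0 and TV(log f) < ∞; set p_f = (1/2) log((f + f₀)/(2f₀)) and J(f) = 1 + TV(log f) + TV(log f₀), and for M ≥ 1 let P_M = {p_f : f ∈ F, J(f) ≤ M}. Then there is a constant A such that for every probability measure Q on [a,b], every M ≥ 1, and every δ > 0, there exist pairs of functions (l₁,u₁),...,(l_N,u_N) with N ≤ exp(A·M/δ) such that ‖uⱼ − lⱼ‖_{L²(Q)} ≤ δ for each j, and every p ∈ P_M satisfies lⱼ ≤ p ≤ uⱼ pointwise for some j. That is, the bracketing entropy of P_M at radius δ in L²(Q) is at most A·M/δ. -/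
open MeasureTheory Set

/-- membership in the class `F` of probability densities on `[a,b]` that are
positive with log of bounded variation. -/
def InF (a b : ℝ) (f : ℝ → ℝ) : Prop :=
  (∀ t ∈ Set.Icc a b, 0 < f t) ∧
    MeasureTheory.IntegrableOn f (Set.Icc a b) ∧
    (∫ t in Set.Icc a b, f t) = 1 ∧
    eVariationOn (fun t => Real.log (f t)) (Set.Icc a b) ≠ ⊤

/-- `J(f) = 1 + TV(log f) + TV(log f₀)` on `[a,b]`. -/
noncomputable def Jfun (a b : ℝ) (f₀ f : ℝ → ℝ) : ℝ :=
  1 + (eVariationOn (fun t => Real.log (f t)) (Set.Icc a b)).toReal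
    + (eVariationOn (fun t => Real.log (f₀ t)) (Set.Icc a b)).toReal

/-- `p_f = (1/2) log((f + f₀)/(2 f₀))`. -/
noncomputable def pfun (f₀ f : ℝ → ℝ) : ℝ → ℝ :=
  fun t => (1 / 2) * Real.log ((f t + f₀ t) / (2 * f₀ t))


lemma exists_split (Q : Measure ℝ) [IsProbabilityMeasure Q] (x y : ℝ) (hxy : x ≤ y)
    (q1 q2 : ℝ) (h1 : 0 ≤ q1) (h2 : 0 ≤ q2)
    (hQ : Q (Ioo x y) ≤ ENNReal.ofReal (q1 + q2)) :
    ∃ p, x ≤ p ∧ p ≤ y ∧ Q (Ioo x p) ≤ ENNReal.ofReal q1 ∧ Q (Ioo p y) ≤ ENNReal.ofReal q2 := by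
  set S : Set ℝ := {t | t ∈ Icc x y ∧ Q (Ioo x t) ≤ ENNReal.ofReal q1} with hS
  have hxS : x ∈ S := ⟨⟨le_rfl, hxy⟩, by simp⟩
  have hbdd : BddAbove S := ⟨y, fun t ht => ht.1.2⟩
  have hxp : x ≤ sSup S := le_csSup hbdd hxS
  have hpy : sSup S ≤ y := csSup_le ⟨x, hxS⟩ fun t ht => ht.1.2
  refine ⟨sSup S, hxp, hpy, ?_, ?_⟩
  · obtain ⟨s, hs, hsp, hst⟩ := exists_seq_strictMono_tendsto (sSup S)
    have hU : Ioo x (sSup S) = ⋃ n, Ioo x (s n) := by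
      ext t
      simp only [mem_Ioo, mem_iUnion]
      constructor
      · rintro ⟨h, h'⟩
        obtain ⟨n, hn⟩ := (hst.eventually (lt_mem_nhds h')).exists
        exact ⟨n, h, hn⟩
      · rintro ⟨n, h, h'⟩
        exact ⟨h, h'.trans (hsp n)⟩
    have hm : Monotone fun n => Ioo x (s n) := fun i j hij => Ioo_subset_Ioo_right (hs.monotone hij)
    rw [hU, hm.measure_iUnion]
    refine iSup_le fun n => ?_
    obtain ⟨t, ht, hnt⟩ := exists_lt_of_lt_csSup ⟨x, hxS⟩ (hsp n)
    exact (measure_mono (Ioo_subset_Ioo_right hnt.le)).trans ht.2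
  · obtain ⟨s, hs, hsp, hst⟩ := exists_seq_strictAnti_tendsto (sSup S)
    have hU : Ioo (sSup S) y = ⋃ n, Ico (s n) y := by
      ext t
      simp only [mem_Ioo, mem_Ico, mem_iUnion]
      constructor
      · rintro ⟨h, h'⟩
        obtain ⟨n, hn⟩ := (hst.eventually (gt_mem_nhds h)).exists
        exact ⟨n, le_of_lt hn, h'⟩
      · rintro ⟨n, h, h'⟩
        exact ⟨(hsp n).trans_le h, h'⟩
    have hm : Monotone fun n => Ico (s n) y := fun i j hij => Ico_subset_Ico_left (hs.antitone hij)
    rw [hU, hm.measure_iUnion]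
    refine iSup_le fun n => ?_
    rcases le_or_gt y (s n) with hy | hy
    · rw [Ico_eq_empty (not_lt.2 hy)]; simp
    have hlt : ENNReal.ofReal q1 < Q (Ioo x (s n)) := by
      by_contra hcon
      have : s n ∈ S := ⟨⟨hxp.trans (hsp n).le, hy.le⟩, not_lt.1 hcon⟩
      exact absurd (le_csSup hbdd this) (not_le.2 (hsp n))
    have hun : Q (Ioo x (s n)) + Q (Ico (s n) y) ≤ Q (Ioo x y) := by
      rw [← measure_union _ measurableSet_Ico]
      · apply measure_mono
        rintro t (⟨h, h'⟩ | ⟨h, h'⟩)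
        · exact ⟨h, h'.trans hy⟩
        · exact ⟨(hxp.trans_lt (hsp n)).trans_le h, h'⟩
      · rw [Set.disjoint_left]
        rintro t ⟨_, h⟩ ⟨h', _⟩
        exact absurd h (not_lt.2 h')
    rw [ENNReal.ofReal_add h1 h2] at hQ
    have : ENNReal.ofReal q1 + Q (Ico (s n) y) ≤ ENNReal.ofReal q1 + ENNReal.ofReal q2 :=
      (add_le_add_left hlt.le _).trans (hun.trans hQ)
    exact (ENNReal.add_le_add_iff_left ENNReal.ofReal_ne_top).1 this

noncomputable def glue (p s : ℝ) (f1 f2 : ℝ → ℝ) : ℝ → ℝ :=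
  fun t => if t < p then f1 t else if t = p then s else f2 t

lemma glue_integral (Q : Measure ℝ) (x y p η s : ℝ) (_ : x ≤ p) (_ : p ≤ y)
    (l1 u1 l2 u2 : ℝ → ℝ) :
    ∫⁻ t in Ioo x y, ENNReal.ofReal ((glue p (s+η) u1 u2 t - glue p (s-η) l1 l2 t)^2) ∂Q ≤
      (∫⁻ t in Ioo x p, ENNReal.ofReal ((u1 t - l1 t)^2) ∂Q) +
      (ENNReal.ofReal (4*η^2) * Q ({p} ∩ Ioo x y) +
      ∫⁻ t in Ioo p y, ENNReal.ofReal ((u2 t - l2 t)^2) ∂Q) := by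
  have hsub : Ioo x y ⊆ Ioo x p ∪ (({p} ∩ Ioo x y) ∪ Ioo p y) := by
    rintro t ⟨h, h'⟩
    rcases lt_trichotomy t p with h3 | h3 | h3
    · exact Or.inl ⟨h, h3⟩
    · exact Or.inr (Or.inl ⟨h3, h, h'⟩)
    · exact Or.inr (Or.inr ⟨h3, h'⟩)
  refine (lintegral_mono_set hsub).trans ((lintegral_union_le _ _ _).trans ?_)
  refine add_le_add (le_of_eq ?_) ((lintegral_union_le _ _ _).trans (add_le_add (le_of_eq ?_) (le_of_eq ?_)))
  · refine setLIntegral_congr_fun measurableSet_Ioo fun t ht => ?_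
    simp [glue, ht.2]
  · rw [← setLIntegral_const]
    refine setLIntegral_congr_fun ((measurableSet_singleton p).inter measurableSet_Ioo) fun t ht => ?_
    have : t = p := ht.1
    simp only [glue, this, lt_irrefl, if_false, if_true]
    congr 1; ring
  · refine setLIntegral_congr_fun measurableSet_Ioo fun t ht => ?_
    simp [glue, not_lt.2 ht.1.le, ht.1.ne']

lemma glue_mass (Q : Measure ℝ) (x y p : ℝ) (hxp : x ≤ p) :
    Q ({p} ∩ Ioo x y) + Q (Ioo p y) ≤ Q (Ioo x y) := by
  rw [← measure_union _ measurableSet_Ioo]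
  · apply measure_mono
    rintro t (⟨_, h⟩ | ⟨h, h'⟩)
    · exact h
    · exact ⟨hxp.trans_lt h, h'⟩
  · rw [Set.disjoint_left]
    rintro t ⟨h, _⟩ ⟨h', _⟩
    exact absurd h (ne_of_gt h')

lemma glue_bracket (x y p η s : ℝ) (l1 u1 l2 u2 g : ℝ → ℝ)
    (h1 : ∀ t ∈ Ioo x p, l1 t ≤ g t ∧ g t ≤ u1 t)
    (h2 : ∀ t ∈ Ioo p y, l2 t ≤ g t ∧ g t ≤ u2 t) (hp : |g p - s| ≤ η) :
    ∀ t ∈ Ioo x y, glue p (s-η) l1 l2 t ≤ g t ∧ g t ≤ glue p (s+η) u1 u2 t := by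
  rintro t ⟨h, h'⟩
  rw [abs_le] at hp
  rcases lt_trichotomy t p with h3 | h3 | h3
  · simpa [glue, h3] using h1 t ⟨h, h3⟩
  · subst h3
    simp only [glue, lt_irrefl, if_false, if_true]
    constructor <;> linarith
  · simpa [glue, not_lt.2 h3.le, h3.ne'] using h2 t ⟨h3, h'⟩

lemma tsum_int_le : ∑' d : ℤ, (2⁻¹ : ENNReal) ^ (d.natAbs + 2) ≤ 1 := by
  have hN : ∀ k : ℕ, ∑' n : ℕ, (2⁻¹ : ENNReal) ^ (n + (k+1)) = (2⁻¹ : ENNReal)^k := by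
    intro k
    have := ENNReal.tsum_geometric_add_one (2⁻¹)
    simp only [ENNReal.one_sub_inv_two, inv_inv] at this
    simp_rw [show ∀ n, n + (k+1) = (n+1) + k from fun n => by ring, pow_add _ (_+1) k]
    rw [ENNReal.tsum_mul_right, this, ENNReal.inv_mul_cancel (by norm_num) (by norm_num), one_mul]
  rw [tsum_of_nat_of_neg_add_one ENNReal.summable ENNReal.summable]
  have e1 : ∀ n : ℕ, ((n:ℤ)).natAbs + 2 = n + (1+1) := by intro n; omega
  have e2 : ∀ n : ℕ, (-((n:ℤ)+1)).natAbs + 2 = n + (2+1) := by intro n; omega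
  simp_rw [e1, e2, hN]
  calc (2⁻¹ : ENNReal)^1 + 2⁻¹^2 ≤ 2⁻¹ + 2⁻¹ := by
        rw [pow_one]
        gcongr
        rw [pow_two]
        exact mul_le_of_le_one_left (by simp) (by norm_num)
    _ = 1 := ENNReal.inv_two_add_inv_two

lemma kraft_glue {ι : Type} (κ : ℤ → Type) (w1 : ι → ℕ) (w2 : ∀ d, κ d → ℕ)
    (h1 : ∑' i, (2⁻¹ : ENNReal)^(w1 i) ≤ 1) (h2 : ∀ d, ∑' i, (2⁻¹ : ENNReal)^(w2 d i) ≤ 1) :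
    ∑' i : ι × (Σ d, κ d), (2⁻¹ : ENNReal)^(w1 i.1 + ((i.2.1.natAbs + 2) + w2 i.2.1 i.2.2)) ≤ 1 := by
  rw [ENNReal.tsum_prod (f := fun i (j : Σ d, κ d) => (2⁻¹ : ENNReal)^(w1 i + ((j.1.natAbs + 2) + w2 j.1 j.2)))]
  simp_rw [pow_add _ (w1 _), ENNReal.tsum_mul_left, ENNReal.tsum_mul_right]
  refine mul_le_one' h1 ?_
  rw [ENNReal.tsum_sigma (f := fun d (j : κ d) => (2⁻¹ : ENNReal)^((d.natAbs + 2) + w2 d j))]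
  simp_rw [pow_add _ (_ + 2), ENNReal.tsum_mul_left]
  refine le_trans (ENNReal.tsum_le_tsum fun d => ?_) tsum_int_le
  exact mul_le_of_le_one_right' (h2 d)

lemma tsum_opt {ι : Type} (f : Option ι → ENNReal) :
    ∑' i, f i = f none + ∑' i, f (some i) := by
  rw [← (Equiv.optionEquivSumPUnit.{0} ι).symm.tsum_eq f,
    Summable.tsum_sum ENNReal.summable ENNReal.summable]
  simp [add_comm]

lemma kraft_option {ι : Type} (w : ι → ℕ) (h : ∑' i, (2⁻¹ : ENNReal)^(w i) ≤ 1) :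
    ∑' i : Option ι, (2⁻¹ : ENNReal)^(i.elim 1 (fun j => 1 + w j)) ≤ 1 := by
  rw [tsum_opt]
  simp only [Option.elim, pow_add, pow_one, ENNReal.tsum_mul_left]
  calc (2⁻¹ : ENNReal) + 2⁻¹ * ∑' i, (2⁻¹ : ENNReal)^(w i) ≤ 2⁻¹ + 2⁻¹ := by
        gcongr; exact mul_le_of_le_one_right' h
    _ = 1 := ENNReal.inv_two_add_inv_two

lemma exists_round (η r z : ℝ) (hη : 0 < η) :
    ∃ d : ℤ, |z - (r + η * d)| ≤ η ∧ (d.natAbs : ℝ) ≤ |z - r| / η + 1 := by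
  refine ⟨round ((z - r)/η), ?_, ?_⟩
  · have h := abs_sub_round ((z-r)/η)
    have : z - (r + η * (round ((z-r)/η) : ℤ)) = η * ((z-r)/η - round ((z-r)/η)) := by
      field_simp; ring
    rw [this, abs_mul, abs_of_pos hη]
    nlinarith
  · have h := abs_sub_round ((z-r)/η)
    rw [Nat.cast_natAbs, Int.cast_abs]
    have h2 : |(z-r)/η| = |z-r|/η := by rw [abs_div, abs_of_pos hη]
    have := abs_sub_abs_le_abs_sub ((round ((z-r)/η) : ℤ) : ℝ) ((z-r)/η)
    rw [abs_sub_comm] at this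
    linarith

def Adm (g Φ : ℝ → ℝ) : Prop := ∀ s t, s ≤ t → |g t - g s| ≤ Φ t - Φ s

lemma core (Q : Measure ℝ) [IsProbabilityMeasure Q] (m : ℕ) :
    ∀ x y q η r : ℝ, x ≤ y → 0 < η → 0 ≤ q → Q (Ioo x y) ≤ ENNReal.ofReal q →
    ∃ (ι : Type) (l u : ι → ℝ → ℝ) (w : ι → ℕ), ∑' i, (2⁻¹ : ENNReal)^(w i) ≤ 1 ∧
      ∀ g Φ, Adm g Φ → |g x - r| ≤ η → Φ y - Φ x ≤ η * (3/2)^m →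
        ∃ i, (w i : ℝ) ≤ 1 + 21 * ((Φ y - Φ x)/η) ∧
          (∀ t ∈ Ioo x y, l i t ≤ g t ∧ g t ≤ u i t) ∧
          ∫⁻ t in Ioo x y, ENNReal.ofReal ((u i t - l i t)^2) ∂Q ≤
            ENNReal.ofReal (q * η^2 * (16 + 96 * ((Φ y - Φ x)/η))) := by
  have leaf : ∀ x y q η r : ℝ, x ≤ y → 0 < η → 0 ≤ q → Q (Ioo x y) ≤ ENNReal.ofReal q →
      ∀ g Φ, Adm g Φ → |g x - r| ≤ η → Φ y - Φ x ≤ η →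
      ((1:ℕ) : ℝ) ≤ 1 + 21 * ((Φ y - Φ x)/η) ∧
          (∀ t ∈ Ioo x y, r - 2*η ≤ g t ∧ g t ≤ r + 2*η) ∧
          ∫⁻ t in Ioo x y, ENNReal.ofReal (((r+2*η) - (r-2*η))^2) ∂Q ≤
            ENNReal.ofReal (q * η^2 * (16 + 96 * ((Φ y - Φ x)/η))) := by
    intro x y q η r hxy hη hq hQ g Φ hA hr hV
    have hV0 : 0 ≤ (Φ y - Φ x)/η := div_nonneg ((abs_nonneg _).trans (hA x y hxy)) hη.le
    refine ⟨by push_cast; linarith, ?_, ?_⟩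
    · rintro t ⟨h, h'⟩
      have h1 := hA x t h.le
      have h2 := (abs_nonneg _).trans (hA t y h'.le)
      rw [abs_le] at h1 hr
      constructor <;> linarith
    · rw [setLIntegral_const]
      refine (mul_le_mul_right hQ _).trans ?_
      rw [← ENNReal.ofReal_mul (by positivity)]
      apply ENNReal.ofReal_le_ofReal
      have : 0 ≤ q * η^2 := by positivity
      nlinarith [mul_nonneg this hV0]
  induction m with
  | zero =>
    intro x y q η r hxy hη hq hQ
    refine ⟨Unit, fun _ _ => r - 2*η, fun _ _ => r + 2*η, fun _ => 1, by simp, ?_⟩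
    intro g Φ hA hr hV
    exact ⟨(), leaf x y q η r hxy hη hq hQ g Φ hA hr (by simpa using hV)⟩
  | succ m ih =>
    intro x y q η r hxy hη hq hQ
    obtain ⟨p, hxp, hpy, hQ1, hQ2⟩ := exists_split Q x y hxy (q/2) (q/2) (by positivity) (by positivity)
      (by simpa using hQ)
    obtain ⟨ι, l1, u1, w1, hk1, H1⟩ := ih x p (q/2) (3/2*η) r hxp (by positivity) (by positivity) hQ1
    choose κ l2 u2 w2 hk2 H2 using fun d : ℤ =>
      ih p y (q/2) (3/2*η) (r + η*d) hpy (by positivity) (by positivity) hQ2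
    refine ⟨Option (ι × (Σ d, κ d)),
      fun i => i.elim (fun _ => r - 2*η) (fun j => glue p ((r + η * j.2.1) - η) (l1 j.1) (l2 j.2.1 j.2.2)),
      fun i => i.elim (fun _ => r + 2*η) (fun j => glue p ((r + η * j.2.1) + η) (u1 j.1) (u2 j.2.1 j.2.2)),
      fun i => i.elim 1 (fun j => 1 + (w1 j.1 + ((j.2.1.natAbs + 2) + w2 j.2.1 j.2.2))),
      kraft_option _ (kraft_glue κ w1 w2 hk1 hk2), ?_⟩
    intro g Φ hA hr hV
    rcases le_or_gt (Φ y - Φ x) η with hc | hc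
    · exact ⟨none, leaf x y q η r hxy hη hq hQ g Φ hA hr hc⟩
    obtain ⟨d, hd, hdn⟩ := exists_round η r (g p) hη
    have hV1 := hA x p hxp
    have hV2 := (abs_nonneg _).trans (hA p y hpy)
    have hV1' := (abs_nonneg _).trans hV1
    have e : η * (3/2)^(m+1) = 3/2*η * (3/2)^m := by ring
    rw [e] at hV
    obtain ⟨i, hi1, hi2, hi3⟩ := H1 g Φ hA (by linarith) (by linarith)
    obtain ⟨j, hj1, hj2, hj3⟩ := H2 d g Φ hA (by linarith) (by linarith)
    have ea : (Φ p - Φ x)/(3/2*η) = 2/3 * ((Φ p - Φ x)/η) := by field_simp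
    have eb : (Φ y - Φ p)/(3/2*η) = 2/3 * ((Φ y - Φ p)/η) := by field_simp
    have ec : (Φ y - Φ x)/η = (Φ p - Φ x)/η + (Φ y - Φ p)/η := by ring
    have hge : 1 < (Φ y - Φ x)/η := by rwa [one_lt_div hη]
    have hA0 : 0 ≤ (Φ p - Φ x)/η := by positivity
    have hB0 : 0 ≤ (Φ y - Φ p)/η := by positivity
    have hgp : |g p - r|/η ≤ (Φ p - Φ x)/η + 1 := by
      have : |g p - r| ≤ (Φ p - Φ x) + η := by
        calc |g p - r| = |(g p - g x) + (g x - r)| := by ring_nf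
          _ ≤ _ := (abs_add_le _ _).trans (add_le_add hV1 hr)
      rw [div_le_iff₀ hη, add_mul, div_mul_cancel₀ _ hη.ne']
      linarith
    rw [ea] at hi1 hi3
    rw [eb] at hj1 hj3
    rw [ec] at hge ⊢
    set X := (Φ p - Φ x)/η
    set Y := (Φ y - Φ p)/η
    refine ⟨some (i, ⟨d, j⟩), ?_, glue_bracket x y p η _ _ _ _ _ g hi2 hj2 hd, ?_⟩
    · simp only [Option.elim]
      push_cast
      linarith
    · simp only [Option.elim]
      refine (glue_integral Q x y p η _ hxp hpy _ _ _ _).trans ?_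
      have hpt : ENNReal.ofReal (4*η^2) * Q ({p} ∩ Ioo x y) ≤ ENNReal.ofReal (4*η^2*q) := by
        rw [ENNReal.ofReal_mul (p := 4*η^2) (by positivity)]
        exact mul_le_mul_right ((measure_mono inter_subset_right).trans hQ) _
      refine (add_le_add hi3 (add_le_add hpt hj3)).trans ?_
      rw [← ENNReal.ofReal_add (by positivity) (by positivity), ← ENNReal.ofReal_add (by positivity) (by positivity)]
      apply ENNReal.ofReal_le_ofReal
      have : 0 ≤ q * η^2 := by positivity
      nlinarith [mul_le_mul_of_nonneg_left hge.le this]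

lemma top (Q : Measure ℝ) [IsProbabilityMeasure Q] (m : ℕ) (q η : ℝ) (hη : 0 < η) (hq : 0 ≤ q)
    (n : ℕ) :
    ∀ x y r : ℝ, x ≤ y → Q (Ioo x y) ≤ ENNReal.ofReal ((n+1) * q) →
    ∃ (ι : Type) (l u : ι → ℝ → ℝ) (w : ι → ℕ), ∑' i, (2⁻¹ : ENNReal)^(w i) ≤ 1 ∧
      ∀ g Φ, Adm g Φ → |g x - r| ≤ η → Φ y - Φ x ≤ η * (3/2)^m →
        ∃ i, (w i : ℝ) ≤ 1 + 5 * n + 22 * ((Φ y - Φ x)/η) ∧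
          (∀ t ∈ Ioo x y, l i t ≤ g t ∧ g t ≤ u i t) ∧
          ∫⁻ t in Ioo x y, ENNReal.ofReal ((u i t - l i t)^2) ∂Q ≤
            ENNReal.ofReal (4*η^2) * Q (Ioo x y) +
            ENNReal.ofReal (q * η^2 * (16 * (n+1) + 96 * ((Φ y - Φ x)/η))) := by
  induction n with
  | zero =>
    intro x y r hxy hQ
    obtain ⟨ι, l, u, w, hk, H⟩ := core Q m x y q η r hxy hη hq (by simpa using hQ)
    refine ⟨ι, l, u, w, hk, fun g Φ hA hr hV => ?_⟩
    obtain ⟨i, h1, h2, h3⟩ := H g Φ hA hr hV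
    have hV0 : 0 ≤ (Φ y - Φ x)/η := div_nonneg ((abs_nonneg _).trans (hA x y hxy)) hη.le
    refine ⟨i, by push_cast; linarith, h2, h3.trans ?_⟩
    simp
  | succ n ih =>
    intro x y r hxy hQ
    obtain ⟨p, hxp, hpy, hQ1, hQ2⟩ := exists_split Q x y hxy q ((n+1)*q) hq (by positivity)
      (by convert hQ using 2; push_cast; ring)
    obtain ⟨ι, l1, u1, w1, hk1, H1⟩ := core Q m x p q η r hxp hη hq hQ1
    choose κ l2 u2 w2 hk2 H2 using fun d : ℤ => ih p y (r + η*d) hpy hQ2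
    refine ⟨ι × (Σ d, κ d),
      fun j => glue p ((r + η * j.2.1) - η) (l1 j.1) (l2 j.2.1 j.2.2),
      fun j => glue p ((r + η * j.2.1) + η) (u1 j.1) (u2 j.2.1 j.2.2),
      fun j => w1 j.1 + ((j.2.1.natAbs + 2) + w2 j.2.1 j.2.2),
      kraft_glue κ w1 w2 hk1 hk2, ?_⟩
    intro g Φ hA hr hV
    obtain ⟨d, hd, hdn⟩ := exists_round η r (g p) hη
    have hV1 := hA x p hxp
    have hV2 := (abs_nonneg _).trans (hA p y hpy)
    have hV1' := (abs_nonneg _).trans hV1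
    obtain ⟨i, hi1, hi2, hi3⟩ := H1 g Φ hA (by linarith) (by linarith)
    obtain ⟨j, hj1, hj2, hj3⟩ := H2 d g Φ hA (by linarith) (by linarith)
    have ec : (Φ y - Φ x)/η = (Φ p - Φ x)/η + (Φ y - Φ p)/η := by ring
    have hA0 : 0 ≤ (Φ p - Φ x)/η := by positivity
    have hB0 : 0 ≤ (Φ y - Φ p)/η := by positivity
    have hgp : |g p - r|/η ≤ (Φ p - Φ x)/η + 1 := by
      have : |g p - r| ≤ (Φ p - Φ x) + η := by
        calc |g p - r| = |(g p - g x) + (g x - r)| := by ring_nf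
          _ ≤ _ := (abs_add_le _ _).trans (add_le_add hV1 hr)
      rw [div_le_iff₀ hη, add_mul, div_mul_cancel₀ _ hη.ne']
      linarith
    rw [ec]
    set X := (Φ p - Φ x)/η
    set Y := (Φ y - Φ p)/η
    refine ⟨(i, ⟨d, j⟩), ?_, glue_bracket x y p η _ _ _ _ _ g hi2 hj2 hd, ?_⟩
    · push_cast
      linarith
    · refine (glue_integral Q x y p η _ hxp hpy _ _ _ _).trans ?_
      refine (add_le_add_right (add_le_add_right hj3 _) _).trans ?_
      refine (add_le_add_left hi3 _).trans ?_
      calc _ = ENNReal.ofReal (4*η^2) * (Q ({p} ∩ Ioo x y) + Q (Ioo p y)) +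
            (ENNReal.ofReal (q * η^2 * (16 + 96 * X)) +
            ENNReal.ofReal (q * η^2 * (16 * (n+1) + 96 * Y))) := by ring
        _ ≤ _ := by
          refine add_le_add (mul_le_mul_right (glue_mass Q x y p hxp) _) ?_
          rw [← ENNReal.ofReal_add (by positivity) (by positivity)]
          apply ENNReal.ofReal_le_ofReal
          push_cast
          apply le_of_eq
          ring

lemma bv_entropy (a b : ℝ) (hab : a < b) (Q : Measure ℝ) [IsProbabilityMeasure Q]
    (hQ : Q (Set.Icc a b)ᶜ = 0) (M δ : ℝ) (hM : 1 ≤ M) (hδ : 0 < δ) (hδM : δ ≤ M) :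
    ∃ N : ℕ, (N : ℝ) ≤ Real.exp (360 * M / δ) ∧
      ∃ lu : Fin N → (ℝ → ℝ) × (ℝ → ℝ),
        (∀ j, (∫⁻ t, ENNReal.ofReal (((lu j).2 t - (lu j).1 t) ^ 2) ∂Q)
          ≤ ENNReal.ofReal (δ ^ 2)) ∧
        ∀ g Φ : ℝ → ℝ, Adm g Φ → (∀ t, |g t| ≤ M) → (∀ s t, Φ t - Φ s ≤ M) →
          ∃ j, ∀ t ∈ Set.Icc a b, (lu j).1 t ≤ g t ∧ g t ≤ (lu j).2 t := by
  obtain ⟨n, hn⟩ : ∃ n : ℕ, n = ⌈11 * M / δ⌉₊ := ⟨_, rfl⟩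
  have hMδ : 1 ≤ M / δ := by rwa [one_le_div hδ]
  have hn1 : 11 * (M / δ) ≤ n := by rw [hn, ← mul_div_assoc]; exact Nat.le_ceil _
  have hn2 : (n:ℝ) ≤ 12 * (M/δ) := by
    have := Nat.ceil_lt_add_one (a := 11 * M / δ) (by positivity)
    rw [← hn, mul_div_assoc] at this
    linarith
  have hn0 : (0:ℝ) < n := by linarith
  obtain ⟨k, rfl⟩ : ∃ k, n = k + 1 := ⟨n - 1, by have : 0 < n := by exact_mod_cast hn0
                                                 omega⟩
  set η : ℝ := M / ((k+1 : ℕ):ℝ) with hηd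
  have hη : 0 < η := by positivity
  have hMη : M / η = ((k+1 : ℕ):ℝ) := by rw [hηd]; field_simp
  have hηδ : 11 * η ≤ δ := by
    rw [hηd, ← mul_div_assoc, div_le_iff₀ hn0]
    rw [← mul_div_assoc, div_le_iff₀ hδ] at hn1
    linarith
  obtain ⟨m, hm⟩ := pow_unbounded_of_one_lt (M/η) (show (1:ℝ) < 3/2 by norm_num)
  have hm' : M ≤ η * (3/2)^m := by
    rw [div_lt_iff₀ hη] at hm; linarith
  have hQ1 : Q (Ioo (a-1) (b+1)) ≤ ENNReal.ofReal ((k+1) * (1/((k+1:ℕ):ℝ))) := by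
    have : ((k:ℝ)+1) * (1/((k+1:ℕ):ℝ)) = 1 := by push_cast; field_simp
    rw [this]; simpa using prob_le_one
  choose κ l u w hk H using fun d : ℤ =>
    top Q m (1/((k+1:ℕ):ℝ)) η hη (by positivity) k (a-1) (b+1) (0 + η*d) (by linarith) hQ1
  set W : (Σ d, κ d) → ℕ := fun j => (j.1.natAbs + 2) + w j.1 j.2 with hW
  have hkr : ∑' j, (2⁻¹ : ENNReal)^(W j) ≤ 1 := by
    rw [ENNReal.tsum_sigma (f := fun d (j : κ d) => (2⁻¹ : ENNReal)^((d.natAbs + 2) + w d j))]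
    simp_rw [pow_add _ (_ + 2), ENNReal.tsum_mul_left]
    refine le_trans (ENNReal.tsum_le_tsum fun d => ?_) tsum_int_le
    exact mul_le_of_le_one_right' (hk d)
  have hεne : (2⁻¹ : ENNReal)^(30*(k+1)) ≠ 0 := by simp
  obtain ⟨hfin, hcard⟩ := ENNReal.finset_card_const_le_le_of_tsum_le ENNReal.one_ne_top hkr hεne
  classical
  set S : Finset (Σ d, κ d) := hfin.toFinset.filter
    (fun j => ∫⁻ t, ENNReal.ofReal ((u j.1 j.2 t - l j.1 j.2 t)^2) ∂Q ≤ ENNReal.ofReal (δ^2)) with hS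
  have hSc : (S.card : ℝ) ≤ 2^(30*(k+1)) := by
    have h1 : (hfin.toFinset.card : ENNReal) ≤ ((2^(30*(k+1)) : ℕ) : ENNReal) := by
      refine hcard.trans (le_of_eq ?_)
      rw [one_div, ← ENNReal.inv_pow, inv_inv]
      push_cast
      rfl
    have h2 : hfin.toFinset.card ≤ 2^(30*(k+1)) := by exact_mod_cast h1
    exact_mod_cast (Finset.card_filter_le _ _).trans h2
  refine ⟨S.card, ?_, fun i => (l (S.equivFin.symm i).1.1 (S.equivFin.symm i).1.2,
    u (S.equivFin.symm i).1.1 (S.equivFin.symm i).1.2), ?_, ?_⟩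
  · refine hSc.trans ?_
    have h2 : (2:ℝ) ≤ Real.exp 1 := by have := Real.add_one_le_exp (1:ℝ); linarith
    calc (2:ℝ)^(30*(k+1)) ≤ (Real.exp 1)^(30*(k+1)) := pow_le_pow_left₀ (by norm_num) h2 _
      _ = Real.exp (30*((k+1:ℕ):ℝ)) := by
        rw [← Real.exp_nat_mul]; congr 1; push_cast; ring
      _ ≤ _ := by
        apply Real.exp_le_exp.2
        rw [mul_div_assoc]; linarith
  · intro j
    exact (Finset.mem_filter.1 (S.equivFin.symm j).2).2
  · intro g Φ hA hg hΦ
    obtain ⟨d, hd, hdn⟩ := exists_round η 0 (g (a-1)) hη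
    obtain ⟨j, hj1, hj2, hj3⟩ := H d g Φ hA hd ((hΦ _ _).trans hm')
    have hx0 : 0 ≤ (Φ (b+1) - Φ (a-1))/η :=
      div_nonneg ((abs_nonneg _).trans (hA (a-1) (b+1) (by linarith))) hη.le
    have hx1 : (Φ (b+1) - Φ (a-1))/η ≤ ((k+1:ℕ):ℝ) := by
      rw [← hMη]; gcongr; exact hΦ _ _
    have hd1 : |g (a-1) - 0|/η ≤ ((k+1:ℕ):ℝ) := by
      rw [← hMη, sub_zero]; gcongr; exact hg _
    have hmem : (⟨d, j⟩ : Σ d, κ d) ∈ S := by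
      rw [hS, Finset.mem_filter]
      constructor
      · rw [Set.Finite.mem_toFinset]
        have : W ⟨d, j⟩ ≤ 30*(k+1) := by
          have : ((W ⟨d, j⟩ : ℕ):ℝ) ≤ ((30*(k+1) : ℕ):ℝ) := by
            simp only [hW]
            push_cast at *
            linarith
          exact_mod_cast this
        exact pow_le_pow_right_of_le_one' (show (2⁻¹ : ENNReal) ≤ 1 by norm_num) this
      · have hae : Q.restrict (Ioo (a-1) (b+1)) = Q := by
          apply Measure.restrict_eq_self_of_ae_mem
          rw [ae_iff]
          refine measure_mono_null (fun t ht => ?_) hQ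
          intro hh
          exact ht ⟨by linarith [hh.1], by linarith [hh.2]⟩
        rw [hae] at hj3
        refine hj3.trans ?_
        refine (add_le_add_left (mul_le_of_le_one_right' prob_le_one) _).trans ?_
        rw [← ENNReal.ofReal_add (by positivity) (by positivity)]
        apply ENNReal.ofReal_le_ofReal
        have h3 : 1/((k+1:ℕ):ℝ) * η^2 * (16 * ((k:ℝ)+1) + 96 * ((Φ (b+1) - Φ (a-1))/η)) ≤ 112 * η^2 := by
          calc _ ≤ 1/((k+1:ℕ):ℝ) * η^2 * (16 * ((k:ℝ)+1) + 96 * ((k+1:ℕ):ℝ)) := by gcongr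
            _ = 112 * η^2 := by push_cast; field_simp; norm_num
        nlinarith
    refine ⟨S.equivFin ⟨_, hmem⟩, fun t ht => ?_⟩
    have hs := S.equivFin.symm_apply_apply ⟨_, hmem⟩
    beta_reduce
    rw [hs]
    exact hj2 t ⟨by linarith [ht.1], by linarith [ht.2]⟩

lemma var_adm (a b : ℝ) (L : ℝ → ℝ) (hL : eVariationOn L (Icc a b) ≠ ⊤) (s t : ℝ)
    (has : a ≤ s) (hst : s ≤ t) (htb : t ≤ b) :
    |L t - L s| ≤ (eVariationOn L (Icc a t)).toReal - (eVariationOn L (Icc a s)).toReal := by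
  have h := eVariationOn.Icc_add_Icc L (s := univ) has hst (mem_univ s)
  simp only [univ_inter] at h
  have h1 : eVariationOn L (Icc a s) ≠ ⊤ :=
    ne_top_of_le_ne_top hL (eVariationOn.mono L (Icc_subset_Icc_right (hst.trans htb)))
  have h2 : eVariationOn L (Icc s t) ≠ ⊤ :=
    ne_top_of_le_ne_top hL (eVariationOn.mono L (Icc_subset_Icc has htb))
  rw [← h, ENNReal.toReal_add h1 h2, add_sub_cancel_left]
  have h3 := eVariationOn.edist_le L (s := Icc s t) (x := t) (y := s) ⟨hst, le_rfl⟩ ⟨le_rfl, hst⟩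
  have h4 := ENNReal.toReal_mono h2 h3
  rwa [edist_dist, ENNReal.toReal_ofReal dist_nonneg, Real.dist_eq] at h4

lemma var_le (a b : ℝ) (L : ℝ → ℝ) (hL : eVariationOn L (Icc a b) ≠ ⊤) (t : ℝ) (htb : t ≤ b) :
    (eVariationOn L (Icc a t)).toReal ≤ (eVariationOn L (Icc a b)).toReal :=
  ENNReal.toReal_mono hL (eVariationOn.mono L (Icc_subset_Icc_right htb))

lemma log_half (A B : ℝ) (hA : 0 < A) (hB : 0 < B) :
    |Real.log ((A+1)/2) - Real.log ((B+1)/2)| ≤ |Real.log A - Real.log B| := by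
  wlog h : B ≤ A generalizing A B
  · have := this B A hB hA (le_of_not_ge h)
    rwa [abs_sub_comm, abs_sub_comm (Real.log A)]
  have h1 : Real.log B ≤ Real.log A := Real.log_le_log hB h
  have h2 : Real.log ((B+1)/2) ≤ Real.log ((A+1)/2) := Real.log_le_log (by positivity) (by linarith)
  rw [abs_of_nonneg (by linarith), abs_of_nonneg (by linarith), ← Real.log_div (by positivity) (by positivity),
    ← Real.log_div (by positivity) (by positivity)]
  apply Real.log_le_log (by positivity)
  rw [div_div_div_cancel_right₀ (by norm_num), div_le_div_iff₀ (by positivity) hB]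
  nlinarith

lemma exists_le (a b : ℝ) (hab : a < b) (f h : ℝ → ℝ) (hf : IntegrableOn f (Icc a b))
    (hh : IntegrableOn h (Icc a b)) (he : ∫ t in Icc a b, f t = ∫ t in Icc a b, h t) :
    ∃ s ∈ Icc a b, f s ≤ h s := by
  by_contra hcon
  push Not at hcon
  have hi : IntegrableOn (fun t => f t - h t) (Icc a b) := hf.sub hh
  have h0 : ∫ t in Icc a b, (f t - h t) = 0 := by rw [integral_sub hf hh, he, sub_self]
  have := (setIntegral_pos_iff_support_of_nonneg_ae (μ := volume) (s := Icc a b) (f := fun t => f t - h t)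
    (ae_restrict_of_forall_mem measurableSet_Icc fun t ht => (sub_pos.2 (hcon t ht)).le) hi).2 ?_
  · linarith
  · have hs : Icc a b ⊆ Function.support (fun t => f t - h t) ∩ Icc a b :=
      fun t ht => ⟨(sub_pos.2 (hcon t ht)).ne', ht⟩
    refine lt_of_lt_of_le ?_ (measure_mono hs)
    simpa using hab

lemma pfun_adm (a b : ℝ) (hab : a < b) (f₀ f : ℝ → ℝ) (hf₀ : InF a b f₀) (hf : InF a b f)
    (M : ℝ) (hJ : Jfun a b f₀ f ≤ M) :
    ∃ g Φ : ℝ → ℝ, Adm g Φ ∧ (∀ t, |g t| ≤ M / 2) ∧ (∀ s t, Φ t - Φ s ≤ M) ∧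
      ∀ t ∈ Icc a b, g t = pfun f₀ f t := by
  obtain ⟨p0, i0, e0, v0⟩ := hf₀
  obtain ⟨p1, i1, e1, v1⟩ := hf
  set c : ℝ → ℝ := fun t => max a (min b t) with hc
  have hcm : Monotone c := fun s t h => max_le_max le_rfl (min_le_min le_rfl h)
  have hc1 : ∀ t, a ≤ c t := fun t => le_max_left _ _
  have hc2 : ∀ t, c t ≤ b := fun t => max_le hab.le (min_le_left _ _)
  set V1 : ℝ → ℝ := fun t => (eVariationOn (fun t => Real.log (f t)) (Icc a t)).toReal with hV1
  set V0 : ℝ → ℝ := fun t => (eVariationOn (fun t => Real.log (f₀ t)) (Icc a t)).toReal with hV0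
  have n1 : ∀ t, 0 ≤ V1 t := fun t => ENNReal.toReal_nonneg
  have n0 : ∀ t, 0 ≤ V0 t := fun t => ENNReal.toReal_nonneg
  have m1 : ∀ t, V1 (c t) ≤ V1 b := fun t => var_le a b _ v1 _ (hc2 t)
  have m0 : ∀ t, V0 (c t) ≤ V0 b := fun t => var_le a b _ v0 _ (hc2 t)
  have hJ' : 1 + V1 b + V0 b ≤ M := hJ
  have hD : ∀ s t, a ≤ s → s ≤ t → t ≤ b →
      |Real.log (f t / f₀ t) - Real.log (f s / f₀ s)| ≤ (V1 t + V0 t) - (V1 s + V0 s) := by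
    intro s t h1 h2 h3
    rw [Real.log_div (p1 t ⟨h1.trans h2, h3⟩).ne' (p0 t ⟨h1.trans h2, h3⟩).ne',
      Real.log_div (p1 s ⟨h1, h2.trans h3⟩).ne' (p0 s ⟨h1, h2.trans h3⟩).ne']
    have ha := var_adm a b _ v1 s t h1 h2 h3
    have hb := var_adm a b _ v0 s t h1 h2 h3
    simp only [hV1, hV0]
    rw [abs_le] at *
    constructor <;> linarith [ha.1, ha.2, hb.1, hb.2]
  have hD' : ∀ s ∈ Icc a b, ∀ t ∈ Icc a b,
      |Real.log (f t / f₀ t) - Real.log (f s / f₀ s)| ≤ V1 b + V0 b := by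
    intro s hs t ht
    have k1 := var_le a b _ v1 t ht.2
    have k0 := var_le a b _ v0 t ht.2
    have j1 := var_le a b _ v1 s hs.2
    have j0 := var_le a b _ v0 s hs.2
    rcases le_total s t with h | h
    · linarith [hD s t hs.1 h ht.2, n1 s, n0 s]
    · rw [abs_sub_comm]
      linarith [hD t s ht.1 h hs.2, n1 t, n0 t]
  have hpos : ∀ t ∈ Icc a b, 0 < f t / f₀ t := fun t ht => div_pos (p1 t ht) (p0 t ht)
  have hB : ∀ t ∈ Icc a b, |Real.log (f t / f₀ t)| ≤ V1 b + V0 b := by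
    intro t ht
    obtain ⟨s, hs, hs'⟩ := exists_le a b hab f f₀ i1 i0 (e1.trans e0.symm)
    obtain ⟨r, hr, hr'⟩ := exists_le a b hab f₀ f i0 i1 (e0.trans e1.symm)
    have ls : Real.log (f s / f₀ s) ≤ 0 :=
      Real.log_nonpos (hpos s hs).le ((div_le_one (p0 s hs)).2 hs')
    have lr : 0 ≤ Real.log (f r / f₀ r) := Real.log_nonneg ((one_le_div (p0 r hr)).2 hr')
    have h1 := abs_le.1 (hD' s hs t ht)
    have h2 := abs_le.1 (hD' r hr t ht)
    rw [abs_le]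
    constructor <;> linarith [h1.1, h1.2, h2.1, h2.2]
  have hp : ∀ t ∈ Icc a b, pfun f₀ f t = (1/2) * Real.log ((f t / f₀ t + 1)/2) := by
    intro t ht
    have := p0 t ht
    unfold pfun
    congr 2
    field_simp
  have hcI : ∀ t, c t ∈ Icc a b := fun t => ⟨hc1 t, hc2 t⟩
  refine ⟨fun t => pfun f₀ f (c t), fun t => V1 (c t) + V0 (c t), ?_, ?_, ?_, ?_⟩
  · intro s t hst
    beta_reduce
    rw [hp _ (hcI s), hp _ (hcI t), ← mul_sub, abs_mul]
    have h1 := log_half _ _ (hpos _ (hcI t)) (hpos _ (hcI s))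
    have h2 := hD (c s) (c t) (hc1 s) (hcm hst) (hc2 t)
    have h3 := abs_nonneg (Real.log ((f (c t) / f₀ (c t) + 1)/2) - Real.log ((f (c s) / f₀ (c s) + 1)/2))
    rw [abs_of_pos (by norm_num : (0:ℝ) < 1/2)]
    linarith
  · intro t
    beta_reduce
    rw [hp _ (hcI t), abs_mul, abs_of_pos (by norm_num : (0:ℝ) < 1/2)]
    have h1 := log_half _ 1 (hpos _ (hcI t)) one_pos
    have h2 := hB _ (hcI t)
    norm_num at h1
    linarith
  · intro s t
    beta_reduce
    linarith [m1 t, m0 t, n1 (c s), n0 (c s)]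
  · intro t ht
    have : c t = t := by simp [hc, ht.1, ht.2]
    beta_reduce
    rw [this]

theorem stmt_13 (a b : ℝ) (hab : a < b)
    (f₀ : ℝ → ℝ) (hf₀ : InF a b f₀) :
    ∃ A : ℝ, ∀ Q : Measure ℝ, IsProbabilityMeasure Q → Q (Set.Icc a b)ᶜ = 0 →
      ∀ M ≥ (1 : ℝ), ∀ δ > (0 : ℝ),
        ∃ N : ℕ, (N : ℝ) ≤ Real.exp (A * M / δ) ∧
          ∃ lu : Fin N → (ℝ → ℝ) × (ℝ → ℝ),
            (∀ j, (∫⁻ t, ENNReal.ofReal (((lu j).2 t - (lu j).1 t) ^ 2) ∂Q)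
              ≤ ENNReal.ofReal (δ ^ 2)) ∧
            ∀ f : ℝ → ℝ, InF a b f → Jfun a b f₀ f ≤ M →
              ∃ j, ∀ t ∈ Set.Icc a b,
                (lu j).1 t ≤ pfun f₀ f t ∧ pfun f₀ f t ≤ (lu j).2 t := by
  refine ⟨360, fun Q hQp hQ M hM δ hδ => ?_⟩
  rcases le_or_gt δ M with h | h
  · obtain ⟨N, hN, lu, h1, h2⟩ := bv_entropy a b hab Q hQ M δ hM hδ h
    refine ⟨N, hN, lu, h1, fun f hf hJ => ?_⟩
    obtain ⟨g, Φ, hA, hg, hΦ, he⟩ := pfun_adm a b hab f₀ f hf₀ hf M hJ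
    obtain ⟨j, hj⟩ := h2 g Φ hA (fun t => (hg t).trans (by linarith)) hΦ
    refine ⟨j, fun t ht => ?_⟩
    rw [← he t ht]
    exact hj t ht
  · refine ⟨1, ?_, fun _ => (fun _ => -(M/2), fun _ => M/2), ?_, ?_⟩
    · rw [Nat.cast_one]
      exact Real.one_le_exp (by positivity)
    · intro j
      simp only [lintegral_const, measure_univ, mul_one]
      apply ENNReal.ofReal_le_ofReal
      nlinarith
    · intro f hf hJ
      obtain ⟨g, Φ, hA, hg, hΦ, he⟩ := pfun_adm a b hab f₀ f hf₀ hf M hJ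
      refine ⟨0, fun t ht => ?_⟩
      rw [← he t ht]
      exact abs_le.1 (hg t)
end

section
/- Let [a,b] ⊂ ℝ be compact, f₀ a probability density on [a,b] with f₀ > 0 and TV(log f₀) < ∞, and let f be a probability density on [a,b] with f > 0 and TV(log f) < ∞. Set p_f = (1/2) log((f + f₀)/(2f₀)) and J(f) = 1 + TV(log f) + TV(log f₀), and suppose J(f) ≤ M. Then: (i) TV(p_f) ≤ M/2; (ii) there exist points x̄, x̲ ∈ [a,b] with p_f(x̄) ≥ 0 and p_f(x̲) ≤ 0; and (iii) sup_{x ∈ [a,b]} |p_f(x)| ≤ M/2. -/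
open MeasureTheory Set

theorem aux_le (A B C D : ℝ) (hA : 0 < A) (hB : 0 < B) (hC : 0 < C) (hD : 0 < D) :
    Real.log ((A + B) / (2 * B)) - Real.log ((C + D) / (2 * D)) ≤
      |Real.log A - Real.log C| + |Real.log B - Real.log D| := by
  set s := |Real.log A - Real.log C| with hs
  set r := |Real.log B - Real.log D| with hr
  have hs0 : 0 ≤ s := abs_nonneg _
  have hr0 : 0 ≤ r := abs_nonneg _
  have h1 : A ≤ C * Real.exp s := by
    rw [← Real.log_le_log_iff hA (by positivity), Real.log_mul hC.ne' (Real.exp_pos _).ne',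
      Real.log_exp]
    linarith [le_abs_self (Real.log A - Real.log C)]
  have h2 : D ≤ B * Real.exp r := by
    rw [← Real.log_le_log_iff hD (by positivity), Real.log_mul hB.ne' (Real.exp_pos _).ne',
      Real.log_exp]
    linarith [neg_abs_le (Real.log B - Real.log D)]
  have h3 : (A + B) / (2 * B) ≤ (C + D) / (2 * D) * Real.exp (s + r) := by
    have h4 : 1 ≤ Real.exp (s + r) := Real.one_le_exp (by linarith)
    have h5 : A * D ≤ C * B * Real.exp (s + r) := by
      calc A * D ≤ (C * Real.exp s) * (B * Real.exp r) := by gcongr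
        _ = _ := by rw [Real.exp_add]; ring
    rw [div_mul_eq_mul_div, div_le_div_iff₀ (by positivity) (by positivity)]
    have h6 : B * D * 1 ≤ B * D * Real.exp (s + r) := by gcongr
    nlinarith
  have h7 := Real.log_le_log (by positivity) h3
  rw [Real.log_mul (by positivity) (Real.exp_pos _).ne', Real.log_exp] at h7
  linarith

theorem aux_edist (A B C D : ℝ) (hA : 0 < A) (hB : 0 < B) (hC : 0 < C) (hD : 0 < D) :
    edist ((1 / 2) * Real.log ((A + B) / (2 * B))) ((1 / 2) * Real.log ((C + D) / (2 * D))) ≤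
      ENNReal.ofReal (1 / 2) *
        (edist (Real.log A) (Real.log C) + edist (Real.log B) (Real.log D)) := by
  rw [edist_dist, edist_dist, edist_dist, ← ENNReal.ofReal_add dist_nonneg dist_nonneg,
    ← ENNReal.ofReal_mul (by norm_num)]
  apply ENNReal.ofReal_le_ofReal
  simp only [Real.dist_eq]
  have h1 := aux_le A B C D hA hB hC hD
  have h2 := aux_le C D A B hC hD hA hB
  rw [abs_sub_comm (Real.log C), abs_sub_comm (Real.log D)] at h2
  rw [abs_le]
  constructor <;> linarith

theorem aux_point (a b : ℝ) (hab : a < b) (f g : ℝ → ℝ)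
    (hf : IntegrableOn f (Icc a b)) (hg : IntegrableOn g (Icc a b))
    (h : (∫ t in Icc a b, f t) = ∫ t in Icc a b, g t) : ∃ x ∈ Icc a b, g x ≤ f x := by
  have hμ : volume (Icc a b) ≠ 0 := by simp [hab]
  obtain ⟨x, hx, hle⟩ := exists_setAverage_le (μ := volume) (f := fun t => f t - g t) hμ
    (by simp) (hf.sub hg)
  refine ⟨x, hx, ?_⟩
  rw [setAverage_eq, integral_sub hf hg, h] at hle
  simp at hle
  linarith

/-- if `f, f₀` are positive probability densities on `[a,b]`
with logs of bounded variation and `J(f) = 1 + TV(log f) + TV(log f₀) ≤ M`,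
then for `p_f = (1/2)log((f+f₀)/(2f₀))`:
(i) `TV(p_f) ≤ M/2`; (ii) `p_f` takes a nonnegative and a nonpositive value
on `[a,b]`; (iii) `|p_f| ≤ M/2` on `[a,b]`. -/
theorem stmt_14 (a b : ℝ) (hab : a < b)
    (f₀ f : ℝ → ℝ)
    (hf₀pos : ∀ t ∈ Icc a b, 0 < f₀ t)
    (hf₀int : IntegrableOn f₀ (Icc a b))
    (hf₀one : (∫ t in Icc a b, f₀ t) = 1)
    (hf₀TV : eVariationOn (fun t => Real.log (f₀ t)) (Icc a b) ≠ ⊤)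
    (hfpos : ∀ t ∈ Icc a b, 0 < f t)
    (hfint : IntegrableOn f (Icc a b))
    (hfone : (∫ t in Icc a b, f t) = 1)
    (hfTV : eVariationOn (fun t => Real.log (f t)) (Icc a b) ≠ ⊤)
    (M : ℝ)
    (hJ : 1 + (eVariationOn (fun t => Real.log (f t)) (Icc a b)).toReal
      + (eVariationOn (fun t => Real.log (f₀ t)) (Icc a b)).toReal ≤ M) :
    eVariationOn (fun t => (1 / 2) * Real.log ((f t + f₀ t) / (2 * f₀ t)))
        (Icc a b) ≤ ENNReal.ofReal (M / 2) ∧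
    (∃ xbar ∈ Icc a b,
      0 ≤ (1 / 2) * Real.log ((f xbar + f₀ xbar) / (2 * f₀ xbar))) ∧
    (∃ xlow ∈ Icc a b,
      (1 / 2) * Real.log ((f xlow + f₀ xlow) / (2 * f₀ xlow)) ≤ 0) ∧
    (∀ t ∈ Icc a b,
      |(1 / 2) * Real.log ((f t + f₀ t) / (2 * f₀ t))| ≤ M / 2) := by
  have hV : eVariationOn (fun t => (1 / 2) * Real.log ((f t + f₀ t) / (2 * f₀ t)))
        (Icc a b) ≤ ENNReal.ofReal (M / 2) := by
    have h1 : eVariationOn (fun t => (1 / 2) * Real.log ((f t + f₀ t) / (2 * f₀ t)))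
        (Icc a b) ≤ ENNReal.ofReal (1 / 2) * (eVariationOn (fun t => Real.log (f t)) (Icc a b) +
          eVariationOn (fun t => Real.log (f₀ t)) (Icc a b)) := by
      apply iSup_le
      rintro ⟨n, u, hu, hmem⟩
      refine le_trans (Finset.sum_le_sum fun i _ => aux_edist _ _ _ _ (hfpos _ (hmem (i + 1)))
        (hf₀pos _ (hmem (i + 1))) (hfpos _ (hmem i)) (hf₀pos _ (hmem i))) ?_
      rw [← Finset.mul_sum, Finset.sum_add_distrib]
      gcongr
      · exact eVariationOn.sum_le (f := fun t => Real.log (f t)) hu hmem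
      · exact eVariationOn.sum_le (f := fun t => Real.log (f₀ t)) hu hmem
    refine h1.trans ?_
    rw [← ENNReal.ofReal_toReal hfTV, ← ENNReal.ofReal_toReal hf₀TV,
      ← ENNReal.ofReal_add ENNReal.toReal_nonneg ENNReal.toReal_nonneg,
      ← ENNReal.ofReal_mul (by norm_num)]
    apply ENNReal.ofReal_le_ofReal
    linarith
  have hM : 0 ≤ M / 2 := by
    have h1 := ENNReal.toReal_nonneg (a := eVariationOn (fun t => Real.log (f t)) (Icc a b))
    have h2 := ENNReal.toReal_nonneg (a := eVariationOn (fun t => Real.log (f₀ t)) (Icc a b))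
    linarith
  have hup : ∃ xbar ∈ Icc a b,
      0 ≤ (1 / 2) * Real.log ((f xbar + f₀ xbar) / (2 * f₀ xbar)) := by
    obtain ⟨x, hx, hle⟩ := aux_point a b hab f f₀ hfint hf₀int (hfone.trans hf₀one.symm)
    refine ⟨x, hx, ?_⟩
    have := hf₀pos x hx
    have h := Real.log_nonneg (x := (f x + f₀ x) / (2 * f₀ x))
      (by rw [le_div_iff₀ (by positivity)]; linarith)
    linarith
  have hlow : ∃ xlow ∈ Icc a b,
      (1 / 2) * Real.log ((f xlow + f₀ xlow) / (2 * f₀ xlow)) ≤ 0 := by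
    obtain ⟨x, hx, hle⟩ := aux_point a b hab f₀ f hf₀int hfint (hf₀one.trans hfone.symm)
    refine ⟨x, hx, ?_⟩
    have := hf₀pos x hx
    have := hfpos x hx
    have h := Real.log_nonpos (x := (f x + f₀ x) / (2 * f₀ x)) (by positivity)
      (by rw [div_le_iff₀ (by positivity)]; linarith)
    linarith
  refine ⟨hV, hup, hlow, ?_⟩
  intro t ht
  obtain ⟨y, hy, hy0⟩ := hup
  obtain ⟨z, hz, hz0⟩ := hlow
  have key : ∀ w ∈ Icc a b, |(1 / 2) * Real.log ((f t + f₀ t) / (2 * f₀ t)) -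
      (1 / 2) * Real.log ((f w + f₀ w) / (2 * f₀ w))| ≤ M / 2 := by
    intro w hw
    have h := (eVariationOn.edist_le
      (fun t => (1 / 2) * Real.log ((f t + f₀ t) / (2 * f₀ t))) ht hw).trans hV
    rw [edist_dist, ENNReal.ofReal_le_ofReal_iff hM, Real.dist_eq] at h
    exact h
  have h1 := abs_le.1 (key y hy)
  have h2 := abs_le.1 (key z hz)
  rw [abs_le]
  constructor <;> linarith
end

section
/- Let [a,b] ⊂ ℝ be compact, and let f and f₀ be strictly positive probability densities on [a,b] with TV(log f) < ∞ and TV(log f₀) < ∞. Set p_f = (1/2) log((f + f₀)/(2f₀)). Then TV(p_f) ≤ (1/2)(TV(log f) + TV(log f₀)) ≤ (1 + TV(log f) + TV(log f₀))/2. -/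
open MeasureTheory Set

lemma aux_log (p q r s : ℝ) (hp : 0 < p) (hq : 0 < q) (hr : 0 < r) (hs : 0 < s) :
    Real.log ((p + q) / (2 * q)) - Real.log ((r + s) / (2 * s)) ≤
      |Real.log p - Real.log r| + |Real.log q - Real.log s| := by
  set A := |Real.log p - Real.log r| with hA
  set B := |Real.log q - Real.log s| with hB
  have h1 : p ≤ Real.exp A * r := by
    rw [← Real.log_le_log_iff hp (by positivity), Real.log_mul (Real.exp_pos _).ne' hr.ne',
      Real.log_exp]
    linarith [le_abs_self (Real.log p - Real.log r)]
  have h2 : s ≤ Real.exp B * q := by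
    rw [← Real.log_le_log_iff hs (by positivity), Real.log_mul (Real.exp_pos _).ne' hq.ne',
      Real.log_exp]
    linarith [neg_abs_le (Real.log q - Real.log s)]
  have hA1 : 1 ≤ Real.exp A := Real.one_le_exp (abs_nonneg _)
  have hB1 : 1 ≤ Real.exp B := Real.one_le_exp (abs_nonneg _)
  have h3 : (p + q) / (2 * q) ≤ Real.exp (A + B) * ((r + s) / (2 * s)) := by
    rw [Real.exp_add, ← mul_div_assoc, div_le_div_iff₀ (by positivity) (by positivity)]
    have e1 : p * s ≤ (Real.exp A * r) * (Real.exp B * q) := by gcongr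
    have e2 : 1 ≤ Real.exp A * Real.exp B := one_le_mul_of_one_le_of_one_le hA1 hB1
    have e3 : q * s ≤ (Real.exp A * Real.exp B) * (q * s) :=
      le_mul_of_one_le_left (by positivity) e2
    linarith
  have h4 := Real.log_le_log (by positivity) h3
  rw [Real.log_mul (Real.exp_pos _).ne' (by positivity), Real.log_exp] at h4
  linarith

/-- for strictly positive probability densities `f, f₀` on
`[a,b]` with logs of bounded variation,
`TV(p_f) ≤ (1/2)(TV(log f) + TV(log f₀)) ≤ (1 + TV(log f) + TV(log f₀))/2`
where `p_f = (1/2)log((f + f₀)/(2f₀))`. -/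
theorem stmt_16 (a b : ℝ) (hab : a < b)
    (f f₀ : ℝ → ℝ)
    (hfpos : ∀ t ∈ Icc a b, 0 < f t)
    (hfint : IntegrableOn f (Icc a b))
    (hfone : (∫ t in Icc a b, f t) = 1)
    (hfTV : eVariationOn (fun t => Real.log (f t)) (Icc a b) ≠ ⊤)
    (hf₀pos : ∀ t ∈ Icc a b, 0 < f₀ t)
    (hf₀int : IntegrableOn f₀ (Icc a b))
    (hf₀one : (∫ t in Icc a b, f₀ t) = 1)
    (hf₀TV : eVariationOn (fun t => Real.log (f₀ t)) (Icc a b) ≠ ⊤) :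
    (eVariationOn (fun t => (1 / 2) * Real.log ((f t + f₀ t) / (2 * f₀ t)))
        (Icc a b)).toReal ≤
      (1 / 2) * ((eVariationOn (fun t => Real.log (f t)) (Icc a b)).toReal
        + (eVariationOn (fun t => Real.log (f₀ t)) (Icc a b)).toReal) ∧
    (1 / 2) * ((eVariationOn (fun t => Real.log (f t)) (Icc a b)).toReal
        + (eVariationOn (fun t => Real.log (f₀ t)) (Icc a b)).toReal) ≤
      (1 + (eVariationOn (fun t => Real.log (f t)) (Icc a b)).toReal
        + (eVariationOn (fun t => Real.log (f₀ t)) (Icc a b)).toReal) / 2 := by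
  refine ⟨?_, by linarith⟩
  have key : eVariationOn (fun t => (1 / 2) * Real.log ((f t + f₀ t) / (2 * f₀ t))) (Icc a b) ≤
      ENNReal.ofReal (1 / 2) * (eVariationOn (fun t => Real.log (f t)) (Icc a b)
        + eVariationOn (fun t => Real.log (f₀ t)) (Icc a b)) := by
    refine iSup_le ?_
    rintro ⟨n, u, hu, hus⟩
    have hle : ∀ i ∈ Finset.range n,
        edist ((1 / 2) * Real.log ((f (u (i+1)) + f₀ (u (i+1))) / (2 * f₀ (u (i+1)))))
          ((1 / 2) * Real.log ((f (u i) + f₀ (u i)) / (2 * f₀ (u i)))) ≤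
        ENNReal.ofReal (1 / 2) * (edist (Real.log (f (u (i+1)))) (Real.log (f (u i)))
          + edist (Real.log (f₀ (u (i+1)))) (Real.log (f₀ (u i)))) := by
      intro i _
      simp only [edist_dist, Real.dist_eq]
      rw [← ENNReal.ofReal_add (abs_nonneg _) (abs_nonneg _),
        ← ENNReal.ofReal_mul (by norm_num)]
      apply ENNReal.ofReal_le_ofReal
      have g1 := aux_log _ _ _ _ (hfpos _ (hus (i+1))) (hf₀pos _ (hus (i+1)))
        (hfpos _ (hus i)) (hf₀pos _ (hus i))
      have g2 := aux_log _ _ _ _ (hfpos _ (hus i)) (hf₀pos _ (hus i))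
        (hfpos _ (hus (i+1))) (hf₀pos _ (hus (i+1)))
      rw [abs_sub_comm (Real.log (f (u i))), abs_sub_comm (Real.log (f₀ (u i)))] at g2
      rw [abs_le]
      constructor <;> linarith
    refine (Finset.sum_le_sum hle).trans ?_
    rw [← Finset.mul_sum, Finset.sum_add_distrib]
    gcongr
    · exact eVariationOn.sum_le (f := fun t => Real.log (f t)) hu hus
    · exact eVariationOn.sum_le (f := fun t => Real.log (f₀ t)) hu hus
  have h := ENNReal.toReal_mono
    (ENNReal.mul_ne_top ENNReal.ofReal_ne_top (ENNReal.add_ne_top.2 ⟨hfTV, hf₀TV⟩)) key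
  rwa [ENNReal.toReal_mul, ENNReal.toReal_add hfTV hf₀TV,
    ENNReal.toReal_ofReal (by norm_num)] at h
end

section
/- Let [a,b] ⊂ ℝ be compact, let M > 0, and let G be any collection of functions g : [a,b] → ℝ such that every g ∈ G has TV(g) ≤ M and every g ∈ G takes at least one nonnegative value and at least one nonpositive value. Then there is a universal constant K (not depending on G, M, or the measure) such that for every probability measure Q on [a,b] and every ε > 0, there exist pairs of functions (l₁,u₁),...,(l_N,u_N) with N ≤ exp(K·M/ε) such that ‖uⱼ − lⱼ‖_{L²(Q)} ≤ ε for each j, and every g ∈ G satisfies lⱼ ≤ g ≤ uⱼ pointwise for some j; i.e., the bracketing entropy of G at radius ε in L²(Q) is at most K·M/ε. -/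
open MeasureTheory Set

lemma aux_grid (a b : ℝ) (hab : a ≤ b) (Q : Measure ℝ) (hQ : IsProbabilityMeasure Q)
    (hs : Q (Set.Icc a b)ᶜ = 0) (N : ℕ) (hN : 0 < N) :
    ∃ x : ℕ → ℝ, x 0 = a ∧ x N = b ∧ (∀ i, x i ∈ Icc a b) ∧ Monotone x ∧
      ∀ i, Q (Ioo (x i) (x (i+1))) ≤ ENNReal.ofReal (1 / N) := by
  have hN' : (0:ℝ) < N := by exact_mod_cast hN
  set F : ℝ → ℝ := fun y => Q.real (Iio y) with hF
  have hFm : Monotone F := fun y z h => measureReal_mono (Iio_subset_Iio h)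
  have hFa : F a = 0 := by
    have : Q (Iio a) = 0 := measure_mono_null (fun y hy => by
      simp only [mem_compl_iff, mem_Icc, not_and_or, not_le]; left; exact hy) hs
    simp [hF, Measure.real, this]
  have hF0 : ∀ y, 0 ≤ F y := fun y => measureReal_nonneg
  have hF1 : ∀ y, F y ≤ 1 := fun y => measureReal_le_one
  set S : ℕ → Set ℝ := fun i => {y | y ∈ Icc a b ∧ F y ≤ i / N} with hS
  have haS : ∀ i, a ∈ S i := fun i => ⟨⟨le_refl _, hab⟩, by rw [hFa]; positivity⟩
  have hbd : ∀ i, BddAbove (S i) := fun i => ⟨b, fun y hy => hy.1.2⟩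
  have hmem : ∀ i, sSup (S i) ∈ Icc a b := fun i =>
    ⟨le_csSup (hbd i) (haS i), csSup_le ⟨a, haS i⟩ fun y hy => hy.1.2⟩
  refine ⟨fun i => if i = 0 then a else sSup (S i), by simp, ?_, ?_, ?_, ?_⟩
  · simp only [hN.ne', if_false]
    refine le_antisymm (hmem N).2 (le_csSup (hbd N) ⟨⟨hab, le_refl _⟩, ?_⟩)
    rw [div_self hN'.ne']; exact hF1 b
  · intro i
    dsimp only
    split_ifs
    · exact ⟨le_refl _, hab⟩
    · exact hmem i
  · intro i j hij
    dsimp only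
    split_ifs with h1 h2 h2
    · exact le_refl _
    · exact (hmem j).1
    · omega
    · refine csSup_le_csSup (hbd j) ⟨a, haS i⟩ fun y hy => ⟨hy.1, hy.2.trans ?_⟩
      gcongr
  · intro i
    simp only [Nat.succ_ne_zero, if_false]
    set c : ℝ := if i = 0 then a else sSup (S i) with hc
    set d := sSup (S (i+1)) with hd
    have hca : a ≤ c := by rw [hc]; split_ifs; exacts [le_refl _, (hmem i).1]
    have hu : ∀ u, c < u → u < d → (i:ℝ) / N ≤ F u := by
      intro u h1 h2
      by_cases hi : i = 0
      · simp [hi, hF0]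
      · by_contra hlt
        rw [hc, if_neg hi] at h1
        refine absurd (le_csSup (hbd i) (a := u) ⟨⟨(hmem i).1.trans h1.le, h2.le.trans (hmem _).2⟩, (not_le.1 hlt).le⟩) (not_le.2 h1)
    have hv : ∀ v, v < d → F v ≤ ((i+1 : ℕ):ℝ) / N := by
      intro v h
      obtain ⟨y, hy, hvy⟩ := exists_lt_of_lt_csSup ⟨a, haS (i+1)⟩ h
      exact (hFm hvy.le).trans hy.2
    obtain ⟨u, hua, hu1, hut⟩ := exists_seq_strictAnti_tendsto c
    obtain ⟨v, hva, hv1, hvt⟩ := exists_seq_strictMono_tendsto d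
    have hsub : Ioo c d ⊆ ⋃ n, Ico (u n) (v n) := by
      intro y hy
      have e1 := hut.eventually (gt_mem_nhds hy.1)
      have e2 := hvt.eventually (lt_mem_nhds hy.2)
      obtain ⟨n, h1, h2⟩ := (e1.and e2).exists
      exact mem_iUnion.2 ⟨n, h1.le, h2⟩
    refine (measure_mono hsub).trans ?_
    rw [Monotone.measure_iUnion (fun n m h => Ico_subset_Ico (hua.antitone h) (hva.monotone h))]
    refine iSup_le fun n => ?_
    rcases le_or_gt (v n) (u n) with h | h
    · simp [Ico_eq_empty (not_lt.2 h)]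
    · have e : Iio (v n) = Iio (u n) ∪ Ico (u n) (v n) := (Iio_union_Ico_eq_Iio h.le).symm
      have e2 : F (v n) = F (u n) + Q.real (Ico (u n) (v n)) := by
        simp only [hF]
        rw [e, measureReal_union _ measurableSet_Ico]
        rw [Set.disjoint_left]; intro y hy hy2; exact absurd hy2.1 (not_le.2 hy)
      have h3 := hu (u n) (hu1 n) (h.trans (hv1 n))
      have h4 := hv (v n) (hv1 n)
      have : Q.real (Ico (u n) (v n)) ≤ 1 / N := by
        have : ((i+1:ℕ):ℝ)/N = i / N + 1 / N := by push_cast; ring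
        linarith
      rw [← ENNReal.ofReal_toReal (measure_ne_top Q (Ico (u n) (v n)))]
      exact ENNReal.ofReal_le_ofReal this

lemma aux_card (N R : ℕ) (A : ℝ) (hR : 0 < R) (h : (N + R + 1 : ℝ) ≤ R * Real.exp A) :
    (Fintype.card (Sym (Fin (R+1)) (N+1)) : ℝ) ≤ Real.exp (R * (A + 1)) := by
  rw [Sym.card_sym_eq_choose]
  have e : (Fintype.card (Fin (R+1)) + (N+1) - 1) = N + R + 1 := by simp; omega
  rw [e, show (N+R+1).choose (N+1) = (N+R+1).choose R from
    Nat.choose_symm_of_eq_add (by omega)]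
  refine (Nat.choose_le_pow_div R (N+R+1)).trans ?_
  have h1 := Real.pow_div_factorial_le_exp (R:ℝ) (by positivity) R
  calc ((N+R+1:ℕ):ℝ)^R / R.factorial ≤ (R * Real.exp A)^R / R.factorial := by
        push_cast; gcongr
    _ = Real.exp (R * A) * (R ^ R / R.factorial) := by
        rw [mul_pow, ← Real.exp_nat_mul]; ring
    _ ≤ Real.exp (R * A) * Real.exp R := by gcongr
    _ = _ := by rw [← Real.exp_add]; ring_nf

def MonoCls (a b : ℝ) : Set (ℝ → ℝ) := {f | MonotoneOn f (Icc a b) ∧ ∀ x ∈ Icc a b, f x ∈ Icc (0:ℝ) 1}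

lemma aux_level (a b : ℝ) (hab : a ≤ b) (Q : Measure ℝ) (hQ : IsProbabilityMeasure Q)
    (hs : Q (Set.Icc a b)ᶜ = 0) (N R : ℕ) (hN : 0 < N) (hR : 0 < R) :
    ∃ (code : (ℝ → ℝ) → Sym (Fin (R+1)) (N+1)) (A : (ℝ → ℝ) → Set ℝ),
      ∀ f ∈ MonoCls a b, MeasurableSet (A f) ∧ Q (A f) ≤ ENNReal.ofReal (R / N) ∧
        ∀ f' ∈ MonoCls a b, code f = code f' → A f = A f' ∧
          ∀ x ∈ Icc a b, x ∉ A f → |f x - f' x| ≤ 1 / R := by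
  obtain ⟨x, hx0, hxN, hxm, hxmono, hxQ⟩ := aux_grid a b hab Q hQ hs N hN
  have hR' : (0:ℝ) < R := by exact_mod_cast hR
  have hN' : (0:ℝ) < N := by exact_mod_cast hN
  let p : (ℝ → ℝ) → ℕ → ℕ := fun f i => ⌊R * f (x i)⌋₊
  let q : (ℝ → ℝ) → Fin (N+1) → Fin (R+1) := fun f i => Fin.ofNat (R+1) (p f i)
  have hpR : ∀ f ∈ MonoCls a b, ∀ i, p f i ≤ R := by
    intro f hf i
    refine Nat.floor_le_of_le ?_
    nlinarith [(hf.2 _ (hxm i)).2]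
  have hpm : ∀ f ∈ MonoCls a b, Monotone (p f) := by
    intro f hf i j hij
    refine Nat.floor_le_floor ?_
    have := hf.1 (hxm i) (hxm j) (hxmono hij)
    gcongr
  have hqv : ∀ f ∈ MonoCls a b, ∀ i, ((q f i : Fin (R+1)) : ℕ) = p f i := by
    intro f hf i
    simp only [q, Fin.ofNat]
    exact Nat.mod_eq_of_lt (Nat.lt_succ_of_le (hpR f hf i))
  have hqm : ∀ f ∈ MonoCls a b, Monotone (q f) := by
    intro f hf i j hij
    rw [Fin.le_def, hqv f hf, hqv f hf]
    exact hpm f hf hij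
  let A : (ℝ → ℝ) → Set ℝ := fun f =>
    ⋃ i ∈ (Finset.range N).filter (fun i => p f i < p f (i+1)), Ioo (x i) (x (i+1))
  refine ⟨fun f => ⟨(List.ofFn (q f) : Multiset _), by simp⟩, A, fun f hf => ⟨?_, ?_, ?_⟩⟩
  · exact Finset.measurableSet_biUnion _ fun i _ => measurableSet_Ioo
  · refine (measure_biUnion_finset_le _ _).trans ((Finset.sum_le_sum fun i _ => hxQ i).trans ?_)
    rw [Finset.sum_const, nsmul_eq_mul, ← ENNReal.ofReal_natCast, ← ENNReal.ofReal_mul (by positivity)]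
    refine ENNReal.ofReal_le_ofReal ?_
    rw [mul_one_div]
    gcongr
    have h1 : ((Finset.range N).filter (fun i => p f i < p f (i+1))).card
        ≤ ∑ i ∈ Finset.range N, (p f (i+1) - p f i) := by
      rw [Finset.card_filter]
      refine Finset.sum_le_sum fun i _ => ?_
      split_ifs <;> omega
    rw [Finset.sum_range_tsub (hpm f hf)] at h1
    have := hpR f hf N
    omega
  · intro f' hf' hcode
    have hl : List.Perm (List.ofFn (q f)) (List.ofFn (q f')) := by
      have := congrArg Subtype.val hcode
      exact Multiset.coe_eq_coe.1 this
    have hl2 := List.Perm.eq_of_sortedLE (List.sortedLE_ofFn_iff.2 (hqm f hf))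
      (List.sortedLE_ofFn_iff.2 (hqm f' hf')) hl
    have hq : q f = q f' := List.ofFn_injective hl2
    have hp : ∀ i, i ≤ N → p f i = p f' i := by
      intro i hi
      have := congrArg Fin.val (congrFun hq ⟨i, Nat.lt_succ_of_le hi⟩)
      rwa [hqv f hf, hqv f' hf'] at this
    refine ⟨?_, ?_⟩
    · have hfil : (Finset.range N).filter (fun i => p f i < p f (i+1)) =
          (Finset.range N).filter (fun i => p f' i < p f' (i+1)) := by
        refine Finset.filter_congr fun i hi => ?_
        have h1 := Finset.mem_range.1 hi
        rw [hp i h1.le, hp (i+1) h1]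
      simp only [A, hfil]
    · intro t ht htA
      have key : ∃ k, ∀ h ∈ MonoCls a b, (∀ i, i ≤ N → p h i = p f i) → ⌊R * h t⌋₊ = k := by
        by_cases hi : ∃ i, i ≤ N ∧ x i = t
        · obtain ⟨i, hiN, rfl⟩ := hi
          exact ⟨p f i, fun h hh e => e i hiN⟩
        · push Not at hi
          have hex : ∃ i, t < x (i+1) := ⟨N - 1, by
            rw [Nat.sub_add_cancel hN]
            exact lt_of_le_of_ne (hxN ▸ ht.2) (hi N le_rfl).symm⟩
          classical
          have h1 := Nat.find_spec hex
          set i := Nat.find hex with hidef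
          have hiN : i < N := by
            have : i ≤ N - 1 := Nat.find_min' hex (by
              rw [Nat.sub_add_cancel hN]
              exact lt_of_le_of_ne (hxN ▸ ht.2) (hi N le_rfl).symm)
            omega
          have h2 : x i < t := by
            refine lt_of_le_of_ne ?_ (hi i hiN.le)
            rcases Nat.eq_zero_or_pos i with h0 | h0
            · rw [h0, hx0]; exact ht.1
            · have := Nat.find_min hex (m := i - 1) (by omega)
              rw [Nat.sub_add_cancel h0] at this
              exact not_lt.1 this
          have h3 : ¬ p f i < p f (i+1) := by
            intro h
            apply htA
            simp only [A, mem_iUnion]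
            exact ⟨i, by simp [hiN, h], h2, h1⟩
          refine ⟨p f i, fun h hh e => le_antisymm ?_ ?_⟩
          · refine le_trans ?_ (not_lt.1 h3)
            rw [← e (i+1) hiN]
            refine Nat.floor_le_floor ?_
            have := hh.1 ht (hxm (i+1)) h1.le
            gcongr
          · rw [← e i hiN.le]
            refine Nat.floor_le_floor ?_
            have := hh.1 (hxm i) ht h2.le
            gcongr
      obtain ⟨k, hk⟩ := key
      have k1 := hk f hf (fun _ _ => rfl)
      have k2 := hk f' hf' (fun i hi => (hp i hi).symm)
      have n1 := (hf.2 t ht).1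
      have n2 := (hf'.2 t ht).1
      rw [Nat.floor_eq_iff (by positivity)] at k1 k2
      rw [le_div_iff₀ hR', ← abs_of_pos hR', ← abs_mul, abs_le]
      constructor <;> nlinarith

lemma aux_sum1 (m : ℕ) : ∑ j ∈ Finset.range m, (1/2:ℝ)^j = 2 - 2 * (1/2)^m := by
  induction m with
  | zero => simp
  | succ k ih => rw [Finset.sum_range_succ, ih]; ring

lemma aux_sum2 (m : ℕ) : ∑ j ∈ Finset.range m, (1/2:ℝ)^j * (3 * j + 3) = 12 - (1/2)^m * (6 * m + 12) := by
  induction m with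
  | zero => simp
  | succ k ih => rw [Finset.sum_range_succ, ih]; push_cast; ring

lemma aux_pow (m j : ℕ) (h : j ≤ m) : ((2^(m-j) : ℕ) : ℝ) = 2^m * (1/2)^j := by
  push_cast
  rw [pow_sub₀ _ (by norm_num) h, one_div, inv_pow]

lemma aux_mono (a b : ℝ) (hab : a ≤ b) (Q : Measure ℝ) (hQ : IsProbabilityMeasure Q)
    (hs : Q (Set.Icc a b)ᶜ = 0) (m : ℕ) :
    ∃ (S : Type) (_ : Fintype S) (code : (ℝ → ℝ) → S) (W : (ℝ → ℝ) → ℝ → ℝ),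
      (Fintype.card S : ℝ) ≤ Real.exp (12 * 2^m) ∧
      ∀ f ∈ MonoCls a b, Measurable (W f) ∧ (∀ t, 0 ≤ W f t) ∧
        (∫⁻ t, ENNReal.ofReal (W f t) ∂Q) ≤ ENNReal.ofReal (9 / 4^m) ∧
        ∀ f' ∈ MonoCls a b, code f = code f' → W f = W f' ∧
          ∀ t ∈ Icc a b, (f t - f' t)^2 ≤ W f t := by
  have hlev := fun j : ℕ => aux_level a b hab Q hQ hs (2^(m-j) * 8^j) (2^(m-j)) (by positivity)
    (by positivity)
  choose code A hA using hlev
  refine ⟨(j : Fin m) → Sym (Fin (2^(m-(j:ℕ))+1)) (2^(m-(j:ℕ)) * 8^(j:ℕ)+1), inferInstance,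
    fun f j => code j f,
    fun f t => 1/4^m + ∑ j ∈ Finset.range m, (A j f).indicator (fun _ => (4:ℝ)^(j+1)/4^m) t, ?_, ?_⟩
  · rw [Fintype.card_pi]
    push_cast
    calc ∏ j : Fin m, (Fintype.card (Sym (Fin (2^(m-(j:ℕ))+1)) (2^(m-(j:ℕ)) * 8^(j:ℕ)+1)) : ℝ)
        ≤ ∏ j : Fin m, Real.exp (2^m * ((1/2)^(j:ℕ) * (3 * (j:ℕ) + 3))) := by
          refine Finset.prod_le_prod (fun _ _ => by positivity) fun j _ => ?_
          refine (aux_card _ _ (2 + 3 * (j:ℕ)) (by positivity) ?_).trans (le_of_eq ?_)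
          · have h1 : (1:ℝ) ≤ ((2^(m-(j:ℕ)) : ℕ) : ℝ) := by
              exact_mod_cast Nat.one_le_two_pow
            push_cast at h1 ⊢
            have h2 : (3:ℝ) ≤ Real.exp 2 := by
              have := Real.add_one_le_exp (2:ℝ); linarith
            have h3 : (8:ℝ)^(j:ℕ) ≤ Real.exp (3 * (j:ℕ)) := by
              rw [mul_comm, Real.exp_nat_mul]
              have : (8:ℝ) ≤ Real.exp 3 := by
                have e : Real.exp 3 = Real.exp 1 ^ 3 := by rw [← Real.exp_nat_mul]; norm_num
                have := Real.add_one_le_exp (1:ℝ)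
                rw [e]
                calc (8:ℝ) = 2^3 := by norm_num
                  _ ≤ _ := by gcongr; linarith
              gcongr
            have h4 : (1:ℝ) ≤ 8^(j:ℕ) := one_le_pow₀ (by norm_num)
            rw [Real.exp_add]
            have h5 : 3 * (8:ℝ)^(j:ℕ) ≤ Real.exp 2 * Real.exp (3 * (j:ℕ)) := by gcongr
            calc (2:ℝ)^(m-(j:ℕ)) * 8^(j:ℕ) + 2^(m-(j:ℕ)) + 1
                ≤ 2^(m-(j:ℕ)) * (3 * 8^(j:ℕ)) := by nlinarith
              _ ≤ _ := by gcongr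
          · rw [aux_pow m j j.2.le]; congr 1; ring
      _ = Real.exp (∑ j : Fin m, (2^m * ((1/2)^(j:ℕ) * (3 * (j:ℕ) + 3)))) := by
          rw [Real.exp_sum]
      _ ≤ _ := by
          rw [← Finset.mul_sum, Finset.sum_range (fun j => (1/2:ℝ)^j * (3 * j + 3)) |>.symm, aux_sum2]
          have : (0:ℝ) ≤ (1/2)^m * (6 * m + 12) := by positivity
          have h2 : (0:ℝ) < 2^m := by positivity
          refine Real.exp_le_exp.2 ?_
          nlinarith
  · intro f hf
    have hmi : ∀ j, Measurable ((A j f).indicator (fun _ : ℝ => (4:ℝ)^(j+1)/4^m)) := fun j =>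
      measurable_const.indicator (hA j f hf).1
    have hnn : ∀ j t, 0 ≤ (A j f).indicator (fun _ : ℝ => (4:ℝ)^(j+1)/4^m) t := fun j t =>
      indicator_nonneg (fun _ _ => by positivity) t
    refine ⟨?_, ?_, ?_, ?_⟩
    · exact measurable_const.add (Finset.measurable_fun_sum _ fun j _ => hmi j)
    · intro t
      have := Finset.sum_nonneg (s := Finset.range m) fun j _ => hnn j t
      positivity
    · have e : ∀ t, ENNReal.ofReal (1/4^m + ∑ j ∈ Finset.range m, (A j f).indicator (fun _ => (4:ℝ)^(j+1)/4^m) t)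
          = ENNReal.ofReal (1/4^m) + ∑ j ∈ Finset.range m, ENNReal.ofReal ((A j f).indicator (fun _ => (4:ℝ)^(j+1)/4^m) t) := by
        intro t
        rw [ENNReal.ofReal_add (by positivity) (Finset.sum_nonneg fun j _ => hnn j t),
          ENNReal.ofReal_sum_of_nonneg fun j _ => hnn j t]
      simp only [e]
      rw [lintegral_add_left measurable_const, lintegral_finsetSum _ fun j _ => (hmi j).ennreal_ofReal]
      have e2 : ∀ j ∈ Finset.range m, (∫⁻ t, ENNReal.ofReal ((A j f).indicator (fun _ => (4:ℝ)^(j+1)/4^m) t) ∂Q)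
          ≤ ENNReal.ofReal (4 / 4^m * (1/2)^j) := by
        intro j hj
        have e3 : ∀ t, ENNReal.ofReal ((A j f).indicator (fun _ => (4:ℝ)^(j+1)/4^m) t)
            = (A j f).indicator (fun _ => ENNReal.ofReal ((4:ℝ)^(j+1)/4^m)) t := by
          intro t
          by_cases ht : t ∈ A j f <;> simp [ht]
        simp only [e3]
        rw [lintegral_indicator_const (hA j f hf).1]
        refine (mul_le_mul_right (hA j f hf).2.1 _).trans ?_
        rw [← ENNReal.ofReal_mul (by positivity)]
        refine ENNReal.ofReal_le_ofReal (le_of_eq ?_)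
        push_cast
        rw [div_mul_cancel_left₀ (by positivity), show (8:ℝ)^j = 4^j * 2^j by rw [← mul_pow]; norm_num]
        field_simp
        rw [one_div, inv_pow]
        field_simp
        ring
      refine (add_le_add_right (Finset.sum_le_sum e2) _).trans ?_
      rw [lintegral_const, measure_univ, mul_one, ← ENNReal.ofReal_sum_of_nonneg fun j _ => by positivity,
        ← ENNReal.ofReal_add (by positivity) (Finset.sum_nonneg fun j _ => by positivity)]
      refine ENNReal.ofReal_le_ofReal ?_
      rw [← Finset.mul_sum, aux_sum1]
      have : (0:ℝ) ≤ (1/2)^m := by positivity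
      calc (1:ℝ)/4^m + 4/4^m * (2 - 2*(1/2)^m) ≤ 1/4^m + 4/4^m * 2 := by gcongr; linarith
        _ = _ := by ring
    · intro f' hf' hc
      have hc' : ∀ j, j < m → code j f = code j f' := fun j hj => congrFun hc ⟨j, hj⟩
      refine ⟨?_, ?_⟩
      · funext t
        dsimp only
        refine congrArg (fun z => (1:ℝ)/4^m + z) ?_
        refine Finset.sum_congr rfl fun j hj => ?_
        have hj' := Finset.mem_range.1 hj
        rw [((hA j f hf).2.2 f' hf' (hc' j hj')).1]
      · intro t ht
        have hsq : ∀ j, j ≤ m → |f t - f' t| ≤ 1 / ((2^(m-j) : ℕ) : ℝ) → (f t - f' t)^2 ≤ 4^j/4^m := by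
          intro j hj h
          rw [← sq_abs]
          calc |f t - f' t|^2 ≤ (1 / ((2^(m-j) : ℕ) : ℝ))^2 := by gcongr
            _ = _ := by
              rw [aux_pow m j hj, show (4:ℝ) = 2^2 by norm_num, ← pow_mul, ← pow_mul, mul_comm 2 j, mul_comm 2 m, pow_mul, pow_mul, ← div_pow]
              congr 1
              rw [one_div, one_div, inv_pow]
              field_simp
        have hex : ∃ j, j = m ∨ t ∉ A j f := ⟨m, Or.inl rfl⟩
        classical
        have hspec := Nat.find_spec hex
        have hmin := fun i => Nat.find_min hex (m := i)
        have hjm : Nat.find hex ≤ m := Nat.find_min' hex (Or.inl rfl)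
        set j := Nat.find hex with hj
        have hle : (f t - f' t)^2 ≤ 4^j/4^m := by
          refine hsq j hjm ?_
          rcases lt_or_eq_of_le hjm with h | h
          · exact ((hA j f hf).2.2 f' hf' (hc' j h)).2 t ht (hspec.resolve_left h.ne)
          · rw [h]
            have h1 := hf.2 t ht
            have h2 := hf'.2 t ht
            simp only [Nat.sub_self, pow_zero, Nat.cast_one, div_one]
            rw [abs_le]; constructor <;> linarith [h1.1, h1.2, h2.1, h2.2]
        have hsn : 0 ≤ ∑ j ∈ Finset.range m, (A j f).indicator (fun _ => (4:ℝ)^(j+1)/4^m) t :=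
          Finset.sum_nonneg fun j _ => hnn j t
        rcases Nat.eq_zero_or_pos j with h0 | h0
        · rw [h0, pow_zero] at hle
          linarith
        · obtain ⟨i, hi⟩ : ∃ i, j = i + 1 := ⟨j - 1, by omega⟩
          have h1 := hmin i (by omega)
          push Not at h1
          have h2 := Finset.single_le_sum (f := fun j => (A j f).indicator (fun _ => (4:ℝ)^(j+1)/4^m) t)
            (fun j _ => hnn j t) (Finset.mem_range.2 (show i < m by omega))
          simp only [indicator_of_mem h1.2] at h2
          rw [hi] at hle
          have : (0:ℝ) ≤ 1/4^m := by positivity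
          linarith

lemma aux_var (a b : ℝ) (hab : a ≤ b) (M : ℝ) (hM : 0 < M) (g : ℝ → ℝ)
    (hv : eVariationOn g (Icc a b) ≤ ENNReal.ofReal M)
    (h1 : ∃ xbar ∈ Icc a b, 0 ≤ g xbar) (h2 : ∃ xlow ∈ Icc a b, g xlow ≤ 0) :
    (∀ t ∈ Icc a b, |g t| ≤ M) ∧
    (fun t => variationOnFromTo g (Icc a b) a t / M) ∈ MonoCls a b ∧
    (fun t => (variationOnFromTo g (Icc a b) a t - g t + M) / (3 * M)) ∈ MonoCls a b := by
  have hbv : BoundedVariationOn g (Icc a b) := (hv.trans_lt ENNReal.ofReal_lt_top).ne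
  have hlb := hbv.locallyBoundedVariationOn
  have ha : a ∈ Icc a b := ⟨le_refl _, hab⟩
  have htr : (eVariationOn g (Icc a b)).toReal ≤ M := ENNReal.toReal_le_of_le_ofReal hM.le hv
  have hd : ∀ x ∈ Icc a b, ∀ y ∈ Icc a b, g x - g y ≤ M := by
    intro x hx y hy
    have := hbv.dist_le hx hy
    rw [Real.dist_eq] at this
    exact (le_abs_self _).trans (this.trans htr)
  have hg : ∀ t ∈ Icc a b, |g t| ≤ M := by
    obtain ⟨x, hx, hx0⟩ := h1
    obtain ⟨y, hy, hy0⟩ := h2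
    intro t ht
    have := hd t ht y hy
    have := hd x hx t ht
    rw [abs_le]; constructor <;> linarith
  have hV : ∀ t ∈ Icc a b, 0 ≤ variationOnFromTo g (Icc a b) a t ∧ variationOnFromTo g (Icc a b) a t ≤ M := by
    intro t ht
    rw [variationOnFromTo.eq_of_le _ _ ht.1]
    refine ⟨ENNReal.toReal_nonneg, (ENNReal.toReal_mono hbv (eVariationOn.mono _ inter_subset_left)).trans htr⟩
  refine ⟨hg, ⟨?_, ?_⟩, ⟨?_, ?_⟩⟩
  · intro x hx y hy hxy
    have := variationOnFromTo.monotoneOn hlb ha hx hy hxy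
    dsimp only; gcongr
  · intro t ht
    have := hV t ht
    exact ⟨div_nonneg this.1 hM.le, (div_le_one hM).2 this.2⟩
  · intro x hx y hy hxy
    have := variationOnFromTo.sub_self_monotoneOn hlb ha hx hy hxy
    simp only [Pi.sub_apply] at this
    dsimp only; gcongr
  · intro t ht
    have := hV t ht
    have h3 := abs_le.1 (hg t ht)
    exact ⟨div_nonneg (by linarith) (by linarith), (div_le_one (by linarith)).2 (by linarith)⟩

theorem stmt_19 (a b : ℝ) (hab : a ≤ b) :
    ∃ K > (0 : ℝ), ∀ M > (0 : ℝ), ∀ G : Set (ℝ → ℝ),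
      (∀ g ∈ G, eVariationOn g (Icc a b) ≤ ENNReal.ofReal M ∧
        (∃ xbar ∈ Icc a b, 0 ≤ g xbar) ∧ (∃ xlow ∈ Icc a b, g xlow ≤ 0)) →
      ∀ Q : Measure ℝ, IsProbabilityMeasure Q → Q (Set.Icc a b)ᶜ = 0 →
        ∀ ε > (0 : ℝ),
          ∃ N : ℕ, (N : ℝ) ≤ Real.exp (K * M / ε) ∧
            ∃ lu : Fin N → (ℝ → ℝ) × (ℝ → ℝ),
              (∀ j, (∫⁻ t, ENNReal.ofReal (((lu j).2 t - (lu j).1 t) ^ 2) ∂Q)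
                ≤ ENNReal.ofReal (ε ^ 2)) ∧
              ∀ g ∈ G, ∃ j, ∀ t ∈ Icc a b,
                (lu j).1 t ≤ g t ∧ g t ≤ (lu j).2 t := by
  refine ⟨1296, by norm_num, ?_⟩
  intro M hM G hG Q hQ hs ε hε
  have hvar := fun g hg => aux_var a b hab M hM g (hG g hg).1 (hG g hg).2.1 (hG g hg).2.2
  rcases le_or_gt (2 * M) ε with hbig | hsmall
  · refine ⟨1, ?_, fun _ => (fun _ => -M, fun _ => M), ?_, ?_⟩
    · rw [Nat.cast_one]; exact Real.one_le_exp (by positivity)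
    · intro j
      dsimp only
      rw [lintegral_const, measure_univ, mul_one]
      refine ENNReal.ofReal_le_ofReal ?_
      nlinarith
    · intro g hg
      exact ⟨0, fun t ht => abs_le.1 ((hvar g hg).1 t ht)⟩
  have hx1 : 1 ≤ 27 * M / ε := by rw [le_div_iff₀ hε]; linarith
  obtain ⟨n, hn1, hn2⟩ := exists_nat_pow_near hx1 (one_lt_two)
  set m := n + 1 with hm
  obtain ⟨S, hfin, code, W, hcard, hW⟩ := aux_mono a b hab Q hQ hs m
  set f1 : (ℝ → ℝ) → ℝ → ℝ := fun g t => variationOnFromTo g (Icc a b) a t / M with hf1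
  set f2 : (ℝ → ℝ) → ℝ → ℝ := fun g t => (variationOnFromTo g (Icc a b) a t - g t + M) / (3 * M) with hf2
  let cd : (ℝ → ℝ) → S × S := fun g => (code (f1 g), code (f2 g))
  let w : (ℝ → ℝ) → ℝ → ℝ := fun g t => Real.sqrt (2 * M^2 * W (f1 g) t + 18 * M^2 * W (f2 g) t)
  have hg : ∀ (g : ℝ → ℝ) t, g t = M * f1 g t - 3 * M * f2 g t + M := by
    intro g t
    simp only [hf1, hf2]
    field_simp
    ring
  have hclose : ∀ g ∈ G, ∀ g' ∈ G, cd g = cd g' → ∀ t ∈ Icc a b, |g t - g' t| ≤ w g t := by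
    intro g hgG g' hgG' hc t ht
    have c1 : code (f1 g) = code (f1 g') := congrArg Prod.fst hc
    have c2 : code (f2 g) = code (f2 g') := congrArg Prod.snd hc
    have b1 := ((hW _ (hvar g hgG).2.1).2.2.2 _ (hvar g' hgG').2.1 c1).2 t ht
    have b2 := ((hW _ (hvar g hgG).2.2).2.2.2 _ (hvar g' hgG').2.2 c2).2 t ht
    change (f1 g t - f1 g' t)^2 ≤ W (f1 g) t at b1
    change (f2 g t - f2 g' t)^2 ≤ W (f2 g) t at b2
    refine Real.abs_le_sqrt ?_
    rw [hg g t, hg g' t]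
    have hM2 : 0 ≤ M^2 := by positivity
    have := mul_le_mul_of_nonneg_left b1 hM2
    have := mul_le_mul_of_nonneg_left b2 hM2
    nlinarith [sq_nonneg (M * (f1 g t - f1 g' t) + 3 * M * (f2 g t - f2 g' t))]
  have hint : ∀ g ∈ G, (∫⁻ t, ENNReal.ofReal (((g t + w g t) - (g t - w g t)) ^ 2) ∂Q)
      ≤ ENNReal.ofReal (ε^2) := by
    intro g hgG
    obtain ⟨m1, n1, i1, -⟩ := hW _ (hvar g hgG).2.1
    obtain ⟨m2, n2, i2, -⟩ := hW _ (hvar g hgG).2.2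
    change Measurable (W (f1 g)) at m1
    change Measurable (W (f2 g)) at m2
    change ∀ t, 0 ≤ W (f1 g) t at n1
    change ∀ t, 0 ≤ W (f2 g) t at n2
    change (∫⁻ t, ENNReal.ofReal (W (f1 g) t) ∂Q) ≤ _ at i1
    change (∫⁻ t, ENNReal.ofReal (W (f2 g) t) ∂Q) ≤ _ at i2
    have e : ∀ t, ENNReal.ofReal (((g t + w g t) - (g t - w g t)) ^ 2) =
        ENNReal.ofReal (8 * M^2) * ENNReal.ofReal (W (f1 g) t) +
        ENNReal.ofReal (72 * M^2) * ENNReal.ofReal (W (f2 g) t) := by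
      intro t
      have := n1 t
      have := n2 t
      rw [← ENNReal.ofReal_mul (by positivity), ← ENNReal.ofReal_mul (by positivity),
        ← ENNReal.ofReal_add (by positivity) (by positivity)]
      congr 1
      have hsq : w g t ^ 2 = 2 * M^2 * W (f1 g) t + 18 * M^2 * W (f2 g) t :=
        Real.sq_sqrt (by positivity)
      calc _ = 4 * w g t ^ 2 := by ring
        _ = _ := by rw [hsq]; ring
    simp only [e]
    rw [lintegral_add_left (m1.ennreal_ofReal.const_mul _), lintegral_const_mul _ m1.ennreal_ofReal,
      lintegral_const_mul _ m2.ennreal_ofReal]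
    refine (add_le_add (mul_le_mul_right i1 _) (mul_le_mul_right i2 _)).trans ?_
    rw [← ENNReal.ofReal_mul (by positivity), ← ENNReal.ofReal_mul (by positivity),
        ← ENNReal.ofReal_add (by positivity) (by positivity)]
    refine ENNReal.ofReal_le_ofReal ?_
    have h4 : (4:ℝ)^m = (2^m)^2 := by rw [← pow_mul, mul_comm, pow_mul]; norm_num
    rw [h4]
    have h5 : 27 * M ≤ ε * 2^m := by
      rw [div_lt_iff₀ hε] at hn2; linarith
    have h6 : (27*M)^2 ≤ (ε * 2^m)^2 := by gcongr
    have : 8 * M^2 * (9 / (2^m)^2) + 72 * M^2 * (9 / (2^m)^2) = 720 * M^2 / (2^m)^2 := by ring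
    rw [this, div_le_iff₀ (by positivity)]
    nlinarith
  classical
  let br : S × S → (ℝ → ℝ) × (ℝ → ℝ) := fun s =>
    if h : ∃ g ∈ G, cd g = s then
      (fun t => h.choose t - w h.choose t, fun t => h.choose t + w h.choose t)
    else (fun _ => 0, fun _ => 0)
  refine ⟨Fintype.card (S × S), ?_, fun j => br ((Fintype.equivFin (S × S)).symm j), ?_, ?_⟩
  · rw [Fintype.card_prod]
    push_cast
    calc (Fintype.card S : ℝ) * Fintype.card S ≤ Real.exp (12 * 2^m) * Real.exp (12 * 2^m) := by gcongr
      _ = Real.exp (24 * 2^m) := by rw [← Real.exp_add]; ring_nf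
      _ ≤ _ := by
        refine Real.exp_le_exp.2 ?_
        have : 1296 * M / ε = 48 * (27 * M / ε) := by ring
        rw [this, hm, pow_succ]
        linarith
  · intro j
    dsimp only
    generalize (Fintype.equivFin (S × S)).symm j = s
    by_cases h : ∃ g ∈ G, cd g = s
    · simp only [br, dif_pos h]
      exact hint _ h.choose_spec.1
    · simp [br, dif_neg h]
  · intro g hgG
    refine ⟨Fintype.equivFin (S × S) (cd g), ?_⟩
    have h : ∃ g' ∈ G, cd g' = cd g := ⟨g, hgG, rfl⟩
    intro t ht
    have := abs_le.1 (hclose _ h.choose_spec.1 g hgG h.choose_spec.2 t ht)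
    simp only [Equiv.symm_apply_apply, br, dif_pos h]
    constructor <;> linarith [this.1, this.2]
end
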